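/- arXiv:math/0203180 — 3 statements merged into one kernel-verified Lean document; each statement's English description precedes it below -/
import Mathlib

section
/- Assume k has characteristic 0. Let p_1, …, p_t ∈ k^× generate a free abelian subgroup of k^× of rank t, and let a_0, …, a_t ∈ k, not all zero. Then the following are equivalent: (i) a_i ≠ 0 for every 0 ≤ i ≤ t; (ii) for every nonzero homogeneous polynomial F ∈ k[x_0,…,x_t], the set {n ∈ ℤ : F(a_0, a_1 p_1^n, …, a_t p_t^n) = 0} is finite (i.e. the orbit of the point (a_0 : ⋯ : a_t) under the automorphism diag(1, p_1, …, p_t) of P^t is critically dense). -/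
set_option synthInstance.maxHeartbeats 1000000
set_option maxHeartbeats 4000000

noncomputable section

/-- A single multiplier prime to `p` makes all `p ^ i / i!` with `i ≤ M` integral. -/
theorem exists_coprime_mul_prime_pow_eq_mul_factorial {p : ℕ} (hp : p.Prime) (M : ℕ) :
    ∃ U : ℕ, Nat.Coprime p U ∧ ∀ i ≤ M, ∃ w : ℕ, U * p ^ i = w * i.factorial := by
  have := Fact.mk hp
  refine ⟨ordCompl[p] M.factorial, Nat.coprime_ordCompl hp M.factorial_ne_zero, fun i hi => ?_⟩
  have h1 := Nat.ordCompl_dvd_ordCompl_of_dvd (Nat.factorial_dvd_factorial hi) p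
  have h2 : ordProj[p] i.factorial ∣ p ^ i := by
    apply pow_dvd_pow
    rw [Nat.factorization_def _ hp]
    exact padicValNat_factorial_le (p := p) i
  have h3 := mul_dvd_mul h1 h2
  rw [mul_comm (i.factorial / _), Nat.ordProj_mul_ordCompl_eq_self] at h3
  obtain ⟨w, hw⟩ := h3
  exact ⟨w, by rw [hw, mul_comm]⟩

open Polynomial in
/-- Up to a factor prime to `p`, the exponential sum with bases `1 + p² yⱼ` agrees on `n ≤ M` with
a polynomial in `p n`. -/
theorem exists_eval_eq_mul_sum_mul_one_add_pow {A ι : Type*} [CommRing A] [Fintype ι] {p : ℕ}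
    (hp : p.Prime) (c y : ι → A) (M : ℕ) :
    ∃ U : ℕ, Nat.Coprime p U ∧ ∃ G : A[X], ∀ n ≤ M,
      G.eval ((p : A) * n) = U * ∑ j, c j * (1 + (p : A) ^ 2 * y j) ^ n := by
  obtain ⟨U, hU, hw⟩ := exists_coprime_mul_prime_pow_eq_mul_factorial hp M
  choose! w hw using hw
  refine ⟨U, hU, ∑ i ∈ Finset.range (M + 1), C ((w i : A) * ∑ j, c j * y j ^ i) *
    ∏ l ∈ Finset.range i, (X - C ((p : A) * l)), fun n hn => ?_⟩
  have key : ∀ i, (∏ l ∈ Finset.range i, ((p : A) * n - p * l)) =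
      (p : A) ^ i * (i.factorial * n.choose i : ℕ) := by
    intro i
    rw [← Nat.descFactorial_eq_factorial_mul_choose]
    simp_rw [← mul_sub]
    rw [Finset.prod_mul_distrib, Finset.prod_const, Finset.card_range,
      ← descPochhammer_eval_eq_descFactorial, descPochhammer_eval_eq_prod_range]
  have bin : ∀ j, (1 + (p : A) ^ 2 * y j) ^ n =
      ∑ i ∈ Finset.range (M + 1), ((p : A) ^ 2 * y j) ^ i * (n.choose i : ℕ) := by
    intro j
    rw [add_comm, add_pow]
    simp only [one_pow, mul_one]
    refine Finset.sum_subset (Finset.range_mono (by omega)) fun i _ hi => ?_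
    rw [Nat.choose_eq_zero_of_lt (by simpa using hi)]
    simp
  simp only [eval_finsetSum, eval_mul, eval_C, eval_prod, eval_sub, eval_X, key, bin,
    Finset.mul_sum, Finset.sum_mul]
  rw [Finset.sum_comm]
  refine Finset.sum_congr rfl fun j _ => Finset.sum_congr rfl fun i hi => ?_
  have := congrArg (Nat.cast : ℕ → A) (hw i (by simpa [Nat.lt_succ_iff] using hi))
  push_cast at this ⊢
  linear_combination (-(c j * y j ^ i * (p : A) ^ i * (n.choose i : A))) * this

open Polynomial in
/-- If `1 + p² yⱼ` are bases in a domain in which `p` is a nonunit with `⋂ pʳ A = 0`, an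
exponential sum in them with infinitely many zeros vanishes identically. -/
theorem sum_mul_one_add_pow_eq_zero_of_infinite {A ι : Type*} [CommRing A] [IsDomain A]
    [CharZero A] [IsNoetherianRing A] [Fintype ι] {p : ℕ} (hp : p.Prime) (hpu : ¬ IsUnit (p : A))
    (c y : ι → A)
    (hinf : {n : ℕ | ∑ j, c j * (1 + (p : A) ^ 2 * y j) ^ n = 0}.Infinite) (n : ℕ) :
    ∑ j, c j * (1 + (p : A) ^ 2 * y j) ^ n = 0 := by
  classical
  have hp0 : (p : A) ≠ 0 := by exact_mod_cast hp.ne_zero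
  have hdvd : ∀ r : ℕ, (p : A) ^ r ∣ ∑ j, c j * (1 + (p : A) ^ 2 * y j) ^ n := by
    intro r
    obtain ⟨s, hs, hcard⟩ := hinf.exists_subset_card_eq r
    obtain ⟨U, hU, G, hG⟩ := exists_eval_eq_mul_sum_mul_one_add_pow hp c y (max n (s.sup id))
    have hcop : IsCoprime ((p : A) ^ r) (U : A) := by
      have := (Nat.isCoprime_iff_coprime.2 hU).map (Int.castRingHom A)
      simpa using IsCoprime.pow_left this
    refine hcop.dvd_of_dvd_mul_left ?_
    rw [← hG n (le_max_left _ _)]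
    by_cases hG0 : G = 0
    · simp [hG0]
    have hprod : (∏ m ∈ s, (X - C ((p : A) * m))) ∣ G := by
      have hinj : Set.InjOn (fun m : ℕ => (p : A) * m) s := fun a _ b _ h => by
        simpa [hp0] using h
      rw [← Finset.prod_image (f := fun x : A => X - C x) hinj]
      rw [Finset.prod, Multiset.prod_X_sub_C_dvd_iff_le_roots hG0, Finset.val_le_iff_val_subset]
      intro x hx
      simp only [Finset.mem_val, Finset.mem_image] at hx
      obtain ⟨m, hm, rfl⟩ := hx
      rw [mem_roots hG0, IsRoot.def, hG m (le_max_of_le_right (Finset.le_sup (f := id) hm)),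
        show _ = _ from hs hm, mul_zero]
    obtain ⟨Q, rfl⟩ := hprod
    rw [eval_mul, eval_prod]
    simp only [eval_sub, eval_X, eval_C, ← mul_sub, Finset.prod_mul_distrib, Finset.prod_const,
      hcard]
    rw [mul_assoc]
    exact dvd_mul_right _ _
  have hI := Ideal.iInf_pow_eq_bot_of_isDomain (Ideal.span {(p : A)})
    (by rwa [Ne, Ideal.span_singleton_eq_top])
  rw [← Ideal.mem_bot, ← hI, Ideal.mem_iInf]
  intro r
  rw [Ideal.span_singleton_pow, Ideal.mem_span_singleton]
  exact hdvd r

/-- Noether normalization of a finitely generated `ℚ`-algebra, with denominators cleared. -/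
theorem exists_algebraicIndependent_isIntegralElem_mul {k : Type*} [Field k] [CharZero k]
    (S : Finset k) :
    ∃ (d : ℕ) (x : Fin d → k), AlgebraicIndependent ℚ x ∧ ∃ e : ℕ, e ≠ 0 ∧
      ∀ s ∈ S, (MvPolynomial.aeval (R := ℤ) x).toRingHom.IsIntegralElem ((e : k) * s) := by
  let L := Algebra.adjoin ℚ (S : Set k)
  have : Algebra.FiniteType ℚ L := (Subalgebra.fg_iff_finiteType L).1 ⟨S, rfl⟩
  obtain ⟨d, g, hg, hint⟩ := exists_integral_inj_algHom_of_fg ℚ L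
  let x : Fin d → k := fun i => g (MvPolynomial.X i)
  have hx : MvPolynomial.aeval x = L.val.comp g := by
    ext i; simp [x]
  have hind : AlgebraicIndependent ℚ x := by
    rw [AlgebraicIndependent, hx]
    exact Subtype.val_injective.comp hg
  have hone : ∀ s ∈ S, ∃ e : ℕ, e ≠ 0 ∧
      (MvPolynomial.aeval (R := ℤ) x).toRingHom.IsIntegralElem ((e : k) * s) := by
    intro s hs
    let _ : Algebra (MvPolynomial (Fin d) ℚ) k := (MvPolynomial.aeval (R := ℚ) x).toRingHom.toAlgebra
    let _ : Algebra (MvPolynomial (Fin d) ℤ) k := (MvPolynomial.aeval (R := ℤ) x).toRingHom.toAlgebra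
    let _ : Algebra (MvPolynomial (Fin d) ℤ) (MvPolynomial (Fin d) ℚ) :=
      MvPolynomial.algebraMvPolynomial
    have : IsScalarTower (MvPolynomial (Fin d) ℤ) (MvPolynomial (Fin d) ℚ) k := by
      refine IsScalarTower.of_algebraMap_eq' ?_
      apply MvPolynomial.ringHom_ext <;> intro i <;> simp [RingHom.algebraMap_toAlgebra]
    have h1 : IsIntegral (MvPolynomial (Fin d) ℚ) s := by
      obtain ⟨Q, hQ, hQ0⟩ := hint ⟨s, Algebra.subset_adjoin hs⟩
      refine ⟨Q, hQ, ?_⟩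
      rw [RingHom.algebraMap_toAlgebra, hx]
      have := Polynomial.hom_eval₂ Q g.toRingHom L.val.toRingHom ⟨s, Algebra.subset_adjoin hs⟩
      refine this.symm.trans ?_
      simpa using hQ0
    obtain ⟨⟨_, m, hm, rfl⟩, h⟩ := IsIntegral.exists_multiple_integral_of_isLocalization
      (R := MvPolynomial (Fin d) ℤ) ((nonZeroDivisors ℤ).map MvPolynomial.C) s h1
    have hm0 : m ≠ 0 := nonZeroDivisors.ne_zero hm
    have h3 : IsIntegral (MvPolynomial (Fin d) ℤ) ((m : k) * s) := by
      rw [Submonoid.smul_def, Algebra.smul_def] at h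
      simpa [RingHom.algebraMap_toAlgebra] using h
    refine ⟨m.natAbs, by simpa using hm0, ?_⟩
    change IsIntegral (MvPolynomial (Fin d) ℤ) _
    rcases Int.natAbs_eq m with h4 | h4
    · rw [h4] at h3; simpa using h3
    · rw [h4] at h3; simpa using h3.neg
  choose! e he0 he using hone
  refine ⟨d, x, hind, ∏ s ∈ S, e s, Finset.prod_ne_zero_iff.2 he0, fun s hs => ?_⟩
  classical
  rw [← Finset.prod_erase_mul S e hs, Nat.cast_mul, mul_assoc]
  refine RingHom.IsIntegralElem.mul _ ?_ (he s hs)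
  rw [← map_natCast (MvPolynomial.aeval (R := ℤ) x).toRingHom]
  exact RingHom.isIntegralElem_map _

/-- The rationals that are integral at `p`. -/
def Rat.integersAt (p : ℕ) [Fact p.Prime] : Subring ℚ where
  carrier := {q | padicNorm p q ≤ 1}
  mul_mem' {a b} ha hb := by
    simp only [Set.mem_ofPred_eq, padicNorm.mul] at *
    exact mul_le_one₀ ha (padicNorm.nonneg _) hb
  one_mem' := by simp
  add_mem' {a b} ha hb := padicNorm.nonarchimedean.trans (max_le ha hb)
  zero_mem' := by simp
  neg_mem' {a} ha := by simpa using ha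

theorem isIntegral_quotient_of_coprime {B : Type*} [CommRing B] {p e : ℕ} (hpe : Nat.Coprime e p)
    (hp : (p : B) = 0) {s : B} (hs : IsIntegral ℤ ((e : B) * s)) : IsIntegral ℤ s := by
  obtain ⟨u, v, huv⟩ := Nat.isCoprime_iff_coprime.2 hpe
  have h : (u : B) * e = 1 := by
    have := congrArg (Int.cast : ℤ → B) huv
    push_cast at this
    simpa [hp] using this
  have h2 : s = (u : B) * ((e : B) * s) := by rw [← mul_assoc, h, one_mul]
  rw [h2]
  exact (by simpa using isIntegral_algebraMap (R := ℤ) (A := B) (x := u) : IsIntegral ℤ (u : B)).mul hs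

/-- A finite subset of a field of characteristic zero lies in a noetherian subring in which some
prime `p` is a nonunit and modulo which the elements of the set are integral over `ℤ`. -/
theorem exists_noetherian_subalgebra {k : Type*} [Field k] [CharZero k] (S : Finset k) :
    ∃ p : ℕ, p.Prime ∧ ∃ A : Subalgebra ℤ k, IsNoetherianRing A ∧ ¬ IsUnit (p : A) ∧
      ∀ s ∈ S, ∃ h : s ∈ A, IsIntegral ℤ (Ideal.Quotient.mk (Ideal.span {(p : A)}) ⟨s, h⟩) := by
  obtain ⟨d, x, hx, e, he0, he⟩ := exists_algebraicIndependent_isIntegralElem_mul S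
  obtain ⟨p, hpe, hp⟩ := Nat.exists_infinite_primes (e + 1)
  have := Fact.mk hp
  have hp0 : (p : k) ≠ 0 := by exact_mod_cast hp.ne_zero
  have hcop : Nat.Coprime e p :=
    (Nat.coprime_of_lt_prime he0 (by omega) hp).symm
  let z : Fin d → k := fun i => x i / p
  have hz : AlgebraicIndependent ℚ z := by
    have hp0' : (p : ℚ) ≠ 0 := by exact_mod_cast hp.ne_zero
    let T (r : ℚ) : MvPolynomial (Fin d) ℚ →ₐ[ℚ] MvPolynomial (Fin d) ℚ :=
      MvPolynomial.aeval fun i => MvPolynomial.C r * MvPolynomial.X i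
    have hT : (T p).comp (T (p : ℚ)⁻¹) = AlgHom.id ℚ _ := by
      ext1 i
      simp only [T, AlgHom.comp_apply, MvPolynomial.aeval_X, map_mul, MvPolynomial.algHom_C,
        MvPolynomial.algebraMap_eq, AlgHom.id_apply]
      rw [← mul_assoc, ← map_mul, inv_mul_cancel₀ hp0', map_one, one_mul]
    have hzT : MvPolynomial.aeval z = (MvPolynomial.aeval (R := ℚ) x).comp (T (p : ℚ)⁻¹) := by
      ext i
      simp [T, z, div_eq_inv_mul]
    rw [AlgebraicIndependent, hzT]
    exact Function.Injective.comp (g := MvPolynomial.aeval (R := ℚ) x) hx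
      (Function.LeftInverse.injective (g := T p) fun P => by simpa using DFunLike.congr_fun hT P)
  let A : Subalgebra ℤ k := Algebra.adjoin ℤ (↑S ∪ Set.range z)
  have hSA : ∀ s ∈ S, s ∈ A := fun s hs => Algebra.subset_adjoin (Or.inl hs)
  have hzA : ∀ i, z i ∈ A := fun i => Algebra.subset_adjoin (Or.inr ⟨i, rfl⟩)
  have hft : Algebra.FiniteType ℤ A := (Subalgebra.fg_iff_finiteType A).1
    (Subalgebra.fg_def.2 ⟨_, S.finite_toSet.union (Set.finite_range z), rfl⟩)
  refine ⟨p, hp, A, Algebra.FiniteType.isNoetherianRing ℤ A, ?_, fun s hs => ⟨hSA s hs, ?_⟩⟩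
  · intro hu
    let O := Rat.integersAt p
    let _ : Algebra (MvPolynomial (Fin d) O) k :=
      (MvPolynomial.eval₂Hom ((algebraMap ℚ k).comp O.subtype) z).toAlgebra
    have hinj : Function.Injective (algebraMap (MvPolynomial (Fin d) O) k) := by
      have : algebraMap (MvPolynomial (Fin d) O) k =
          (MvPolynomial.aeval (R := ℚ) z).toRingHom.comp (MvPolynomial.map O.subtype) := by
        apply MvPolynomial.ringHom_ext <;> intro i <;> simp [RingHom.algebraMap_toAlgebra]
      rw [this]
      exact Function.Injective.comp (g := MvPolynomial.aeval (R := ℚ) z) hz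
        (MvPolynomial.map_injective _ Subtype.val_injective)
    have hA : ∀ a ∈ A, IsIntegral (MvPolynomial (Fin d) O) a := by
      intro a ha
      have hle : A ≤ (integralClosure (MvPolynomial (Fin d) O) k).restrictScalars ℤ := by
        refine Algebra.adjoin_le ?_
        rintro y (hy | ⟨i, rfl⟩)
        · have hes : IsIntegral (MvPolynomial (Fin d) O) ((e : k) * y) := by
            obtain ⟨Q, hQ, hQ0⟩ := he y hy
            let ψ : MvPolynomial (Fin d) ℤ →+* MvPolynomial (Fin d) O :=
              (MvPolynomial.aeval (R := ℤ)
                fun i => (p : MvPolynomial (Fin d) O) * MvPolynomial.X i).toRingHom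
            refine ⟨Q.map ψ, hQ.map _, ?_⟩
            have hψ : (algebraMap (MvPolynomial (Fin d) O) k).comp ψ =
                (MvPolynomial.aeval (R := ℤ) x).toRingHom := by
              apply MvPolynomial.ringHom_ext
              · intro i; simp
              · intro i
                simp [ψ, z, RingHom.algebraMap_toAlgebra, mul_div_cancel₀, hp0]
            rw [Polynomial.eval₂_map, hψ, hQ0]
          have heO : (e : ℚ)⁻¹ ∈ O := by
            change padicNorm p _ ≤ 1
            have : padicNorm p e = 1 := padicNorm.nat_eq_one_iff e |>.2 fun h =>
              hp.one_lt.ne' (Nat.eq_one_of_dvd_coprimes hcop h dvd_rfl)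
            rw [← one_div, padicNorm.div, this]
            simp
          have hinv : IsIntegral (MvPolynomial (Fin d) O) ((e : k)⁻¹) := by
            have := isIntegral_algebraMap (R := MvPolynomial (Fin d) O) (A := k)
              (x := MvPolynomial.C ⟨(e : ℚ)⁻¹, heO⟩)
            simpa [RingHom.algebraMap_toAlgebra] using this
          have := hinv.mul hes
          rwa [inv_mul_cancel_left₀ (by exact_mod_cast he0)] at this
        · change IsIntegral _ _
          have := isIntegral_algebraMap (R := MvPolynomial (Fin d) O) (A := k)
            (x := MvPolynomial.X i)
          simpa [RingHom.algebraMap_toAlgebra] using this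
      exact hle ha
    have hpi : IsIntegral (MvPolynomial (Fin d) O) ((p : k)⁻¹) := by
      obtain ⟨b, hb⟩ := isUnit_iff_exists_inv.1 hu
      have : (b : k) = (p : k)⁻¹ := by
        have := congrArg (Subtype.val : A → k) hb
        push_cast at this
        exact eq_inv_of_mul_eq_one_right this
      rw [← this]
      exact hA b b.2
    have hloc : IsLocalHom (algebraMap (MvPolynomial (Fin d) O)
        (integralClosure (MvPolynomial (Fin d) O) k)) :=
      RingHom.IsIntegral.isLocalHom (fun y => integralClosure.isIntegral y)
        (.of_comp (f := Subtype.val) hinj)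
    have hup : IsUnit (algebraMap (MvPolynomial (Fin d) O)
        (integralClosure (MvPolynomial (Fin d) O) k) (p : MvPolynomial (Fin d) O)) := by
      rw [map_natCast]
      exact .of_mul_eq_one ⟨(p : k)⁻¹, hpi⟩ (Subtype.ext (by simp [hp0]))
    obtain ⟨P, hpP⟩ := isUnit_iff_exists_inv.1 (isUnit_of_map_unit _ _ hup)
    have h1 := congrArg (fun Q => (MvPolynomial.constantCoeff Q : O).1) hpP
    simp only [map_mul, map_natCast, map_one] at h1
    have h2 := congrArg (padicNorm p) h1
    push_cast at h2
    rw [padicNorm.mul, padicNorm.padicNorm_p_of_prime, padicNorm.one] at h2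
    have h3 : padicNorm p (MvPolynomial.constantCoeff P : O).1 ≤ 1 :=
      (MvPolynomial.constantCoeff P : O).2
    have h4 : (p : ℚ)⁻¹ < 1 := inv_lt_one_of_one_lt₀ (by exact_mod_cast hp.one_lt)
    have h5 : (0 : ℚ) < (p : ℚ)⁻¹ := inv_pos.2 (by exact_mod_cast hp.pos)
    nlinarith
  · let q := Ideal.Quotient.mk (Ideal.span {(p : A)})
    have hqp : q (p : A) = 0 := Ideal.Quotient.eq_zero_iff_mem.2 (Ideal.mem_span_singleton_self _)
    refine isIntegral_quotient_of_coprime hcop (by rw [← hqp, map_natCast]) ?_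
    obtain ⟨Q, hQ, hQ0⟩ := he s hs
    refine ⟨Q.map MvPolynomial.constantCoeff, hQ.map _, ?_⟩
    let xA : Fin d → A := fun i => (p : A) * ⟨z i, hzA i⟩
    have hx1 : (MvPolynomial.aeval (R := ℤ) x).toRingHom =
        A.val.toRingHom.comp (MvPolynomial.aeval (R := ℤ) xA).toRingHom := by
      apply MvPolynomial.ringHom_ext
      · intro i; simp
      · intro i
        simp [xA, z, mul_div_cancel₀, hp0]
    have hx2 (f : ℤ →+* A ⧸ Ideal.span {(p : A)}) : f.comp MvPolynomial.constantCoeff =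
        q.comp (MvPolynomial.aeval (R := ℤ) xA).toRingHom := by
      apply MvPolynomial.ringHom_ext
      · intro i; simp
      · intro i
        simp [xA, -map_natCast, hqp]
    rw [Polynomial.eval₂_map, hx2]
    have hQA : Q.eval₂ (MvPolynomial.aeval (R := ℤ) xA).toRingHom ((e : A) * ⟨s, hSA s hs⟩) = 0 := by
      apply Subtype.val_injective
      have := Polynomial.hom_eval₂ Q (MvPolynomial.aeval (R := ℤ) xA).toRingHom A.val.toRingHom
        ((e : A) * ⟨s, hSA s hs⟩)
      rw [← hx1] at this
      refine this.trans ?_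
      simpa using hQ0
    have := Polynomial.hom_eval₂ Q (MvPolynomial.aeval (R := ℤ) xA).toRingHom q
        ((e : A) * ⟨s, hSA s hs⟩)
    rw [hQA, map_zero, map_mul, map_natCast] at this
    exact this.symm

theorem exists_pow_eq_one_of_isIntegral {B : Type*} [CommRing B] {p : ℕ} (hp : p ≠ 0)
    (hpB : (p : B) = 0) {s : B} (hs : IsIntegral ℤ s) (hu : IsUnit s) : ∃ N > 0, s ^ N = 1 := by
  let M := Subalgebra.toSubmodule (Algebra.adjoin ℤ {s})
  have : Module.Finite ℤ M := Module.Finite.iff_fg.2 hs.fg_adjoin_singleton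
  have : Finite M := Module.finite_of_fg_torsion M fun {m} =>
    ⟨⟨(p : ℤ), mem_nonZeroDivisors_of_ne_zero (by exact_mod_cast hp)⟩,
      Subtype.ext (by simp [Submonoid.smul_def, hpB])⟩
  have hmem : ∀ n : ℕ, s ^ n ∈ M := fun n =>
    pow_mem (Algebra.self_mem_adjoin_singleton ℤ s) n
  obtain ⟨i, j, hij, hM⟩ := Finite.exists_ne_map_eq_of_infinite fun n : ℕ => (⟨s ^ n, hmem n⟩ : M)
  have h : s ^ i = s ^ j := congrArg Subtype.val hM
  clear hM
  wlog hlt : i < j generalizing i j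
  · exact this j i hij.symm h.symm (lt_of_le_of_ne (not_lt.1 hlt) hij.symm)
  refine ⟨j - i, by omega, (hu.pow i).mul_left_cancel ?_⟩
  rw [← pow_add, Nat.add_sub_cancel' hlt.le, mul_one, h]

theorem exists_pow_eq_one_add_prime_sq_mul {A : Type*} [CommRing A] {p : ℕ} {s : A} {N : ℕ}
    (h : Ideal.Quotient.mk (Ideal.span {(p : A)}) s ^ N = 1) :
    ∃ y, s ^ (N * p) = 1 + (p : A) ^ 2 * y := by
  rw [← map_pow, ← map_one (Ideal.Quotient.mk _), Ideal.Quotient.eq,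
    Ideal.mem_span_singleton] at h
  obtain ⟨y, hy⟩ := dvd_sub_pow_of_dvd_sub h 1
  refine ⟨y, ?_⟩
  rw [pow_one, one_pow, ← pow_mul] at hy
  rw [← sub_eq_iff_eq_add', hy]

/-- An exponential sum over a field of characteristic zero in which no ratio of two distinct bases
is a root of unity has only finitely many zeros, unless all its coefficients vanish. -/
theorem coeff_eq_zero_of_infinite_zeros {k ι : Type*} [Field k] [CharZero k] [Fintype ι]
    (c l : ι → k) (hl : ∀ j, l j ≠ 0) (hsep : ∀ N : ℕ, 0 < N → Function.Injective fun j => l j ^ N)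
    (hinf : {n : ℕ | ∑ j, c j * l j ^ n = 0}.Infinite) (j : ι) : c j = 0 := by
  classical
  let S : Finset k := Finset.univ.image c ∪ Finset.univ.image l ∪ Finset.univ.image fun j => (l j)⁻¹
  have hcS : ∀ j, c j ∈ S := fun j => by simp [S]
  have hlS : ∀ j, l j ∈ S := fun j => by simp [S]
  have hlS' : ∀ j, (l j)⁻¹ ∈ S := fun j => by simp [S]
  obtain ⟨p, hp, A, hA, hpu, hS⟩ := exists_noetherian_subalgebra S
  choose hSA hSint using hS
  let c' : ι → A := fun j => ⟨c j, hSA _ (hcS j)⟩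
  let l' : ι → A := fun j => ⟨l j, hSA _ (hlS j)⟩
  let q := Ideal.Quotient.mk (Ideal.span {(p : A)})
  have hqp : ((p : ℕ) : A ⧸ Ideal.span {(p : A)}) = 0 := by
    rw [← map_natCast q]
    exact Ideal.Quotient.eq_zero_iff_mem.2 (Ideal.mem_span_singleton_self _)
  have hunit : ∀ j, IsUnit (l' j) := fun j =>
    .of_mul_eq_one ⟨(l j)⁻¹, hSA _ (hlS' j)⟩ (Subtype.ext (mul_inv_cancel₀ (hl j)))
  have hN : ∀ j, ∃ N > 0, q (l' j) ^ N = 1 := fun j =>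
    exists_pow_eq_one_of_isIntegral hp.ne_zero hqp (hSint _ (hlS j)) ((hunit j).map q)
  choose N hN0 hN using hN
  have hy : ∀ j, ∃ y, l' j ^ ((∏ i, N i) * p) = 1 + (p : A) ^ 2 * y := fun j => by
    apply exists_pow_eq_one_add_prime_sq_mul
    obtain ⟨r, hr⟩ := Finset.dvd_prod_of_mem N (Finset.mem_univ j)
    rw [hr, pow_mul, hN, one_pow]
  choose y hy using hy
  set M := (∏ i, N i) * p
  have hM0 : 0 < M := Nat.mul_pos (Finset.prod_pos fun i _ => hN0 i) hp.pos
  clear_value M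
  obtain ⟨r, hr⟩ : ∃ r, {m : ℕ | ∑ j, c j * l j ^ (r + M * m) = 0}.Infinite := by
    by_contra! hcon
    refine hinf ?_
    refine ((Finset.range M).finite_toSet.biUnion fun r _ =>
      (hcon r).image fun m => r + M * m).subset fun n hn => ?_
    simp only [Set.mem_iUnion]
    refine ⟨n % M, by simpa using Nat.mod_lt n hM0, n / M, ?_, Nat.mod_add_div n M⟩
    simpa only [Set.mem_ofPred_eq, Nat.mod_add_div] using hn
  have hcoe : ∀ m : ℕ, ((∑ j, (c' j * l' j ^ r) * (1 + (p : A) ^ 2 * y j) ^ m : A) : k) =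
      ∑ j, c j * l j ^ (r + M * m) := fun m => by
    simp only [← hy]
    push_cast
    refine Finset.sum_congr rfl fun j _ => ?_
    rw [pow_add, pow_mul, mul_assoc]
  have hzero : ∀ m : ℕ, ∑ j, c j * l j ^ (r + M * m) = 0 := fun m => by
    rw [← hcoe, sum_mul_one_add_pow_eq_zero_of_infinite hp hpu]
    · rfl
    · refine hr.mono fun m hm => Subtype.ext ?_
      rw [hcoe]
      exact hm
  let χ : ι → (Multiplicative ℕ →* k) := fun j => powersHom k (l j ^ M)
  have hχ : Function.Injective χ := fun i j h =>
    hsep M hM0 ((powersHom k).injective h)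
  have hlin := (linearIndependent_monoidHom (Multiplicative ℕ) k).comp χ hχ
  have := Fintype.linearIndependent_iff.1 hlin (fun j => c j * l j ^ r) (by
    ext m
    have := hzero m.toAdd
    simpa [χ, pow_add, pow_mul, mul_assoc] using this) j
  simpa [hl] using this

theorem eval_cons_mul_zpow {k : Type*} [Field k] {t : ℕ} (p : Fin t → k) (a : Fin (t + 1) → k)
    (F : MvPolynomial (Fin (t + 1)) k) (n : ℤ) :
    MvPolynomial.eval (Fin.cons (a 0) fun i => a i.succ * p i ^ n) F =
      ∑ m : F.support, (F.coeff m * ∏ j, a j ^ m.1 j) * (∏ i : Fin t, p i ^ m.1 i.succ) ^ n := by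
  rw [MvPolynomial.eval_eq', ← Finset.sum_coe_sort]
  refine Finset.sum_congr rfl fun m _ => ?_
  rw [Fin.prod_univ_succ, Fin.prod_univ_succ, mul_assoc, mul_assoc, ← Finset.prod_zpow,
    ← Finset.prod_mul_distrib]
  simp only [Fin.cons_zero, Fin.cons_succ, mul_pow]
  congr! 4 with i
  rw [← zpow_natCast, ← zpow_natCast, ← zpow_mul, ← zpow_mul, mul_comm]

theorem MvPolynomial.IsHomogeneous.eq_of_apply_succ_eq {R : Type*} [CommSemiring R] {t d : ℕ}
    {F : MvPolynomial (Fin (t + 1)) R} (hF : F.IsHomogeneous d) {m m' : Fin (t + 1) →₀ ℕ}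
    (hm : m ∈ F.support) (hm' : m' ∈ F.support) (h : ∀ i : Fin t, m i.succ = m' i.succ) :
    m = m' := by
  have hdeg : ∀ u ∈ F.support, u 0 + ∑ i : Fin t, u i.succ = d := fun u hu => by
    rw [← Fin.sum_univ_succ, ← Finsupp.degree_eq_sum, Finsupp.degree_eq_weight_one]
    exact hF (MvPolynomial.mem_support_iff.1 hu)
  have h1 := hdeg m hm
  have h2 := hdeg m' hm'
  simp only [h] at h1
  ext j
  refine Fin.cases ?_ h j
  omega

theorem eq_of_prod_pow_zpow_eq {k : Type*} [Field k] {t : ℕ} {p : Fin t → k}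
    (hp0 : ∀ i, p i ≠ 0) (hfree : ∀ m : Fin t → ℤ, (∏ i, p i ^ m i) = 1 → ∀ i, m i = 0)
    {u v : Fin t → ℕ} {N : ℤ} (hN : N ≠ 0)
    (h : (∏ i, p i ^ u i) ^ N = (∏ i, p i ^ v i) ^ N) (i : Fin t) : u i = v i := by
  have h1 := hfree (fun i => ((u i : ℤ) - v i) * N) (by
    simp only [zpow_mul, zpow_sub₀ (hp0 _), zpow_natCast]
    rw [Finset.prod_zpow, Finset.prod_div_distrib, div_zpow, h, div_self]
    exact zpow_ne_zero _ (Finset.prod_ne_zero_iff.2 fun i _ => pow_ne_zero _ (hp0 i))) i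
  have h2 := (mul_eq_zero.1 h1).resolve_right hN
  omega

/-- in characteristic `0`, with `p₁, …, p_t` generating a free abelian
subgroup of `k˟` of rank `t` and `(a₀ : ⋯ : a_t)` a point of `ℙ^t`, the orbit under
`diag(1, p₁, …, p_t)` is critically dense iff every `aᵢ` is nonzero. -/
theorem stmt_15 {k : Type*} [Field k] [IsAlgClosed k] [CharZero k]
    (t : ℕ) (ht : 1 ≤ t) (p : Fin t → k)
    (hp0 : ∀ i, p i ≠ 0)
    (hfree : ∀ m : Fin t → ℤ, (∏ i, p i ^ m i) = 1 → ∀ i, m i = 0)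
    (a : Fin (t + 1) → k) (ha : a ≠ 0) :
    (∀ j, a j ≠ 0) ↔
      ∀ F : MvPolynomial (Fin (t + 1)) k, F ≠ 0 → (∃ d, F.IsHomogeneous d) →
        {n : ℤ | MvPolynomial.eval (Fin.cons (a 0) fun i => a i.succ * p i ^ n) F = 0}.Finite := by
  constructor
  · rintro ha0 F hF0 ⟨d, hF⟩
    by_contra hinf
    obtain ⟨m₀, hm₀⟩ := MvPolynomial.support_nonempty.2 hF0
    let c : F.support → k := fun m => F.coeff m * ∏ j, a j ^ m.1 j
    let l : F.support → k := fun m => ∏ i : Fin t, p i ^ m.1 i.succ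
    have hl : ∀ m, l m ≠ 0 := fun m =>
      Finset.prod_ne_zero_iff.2 fun i _ => pow_ne_zero _ (hp0 i)
    have hc : c ⟨m₀, hm₀⟩ ≠ 0 := mul_ne_zero (MvPolynomial.mem_support_iff.1 hm₀)
      (Finset.prod_ne_zero_iff.2 fun j _ => pow_ne_zero _ (ha0 j))
    have hsep : ∀ N : ℤ, N ≠ 0 → Function.Injective fun m => l m ^ N := fun N hN m m' h =>
      Subtype.ext (hF.eq_of_apply_succ_eq m.2 m'.2 (eq_of_prod_pow_zpow_eq hp0 hfree hN h))
    have hfin : ∀ ε : ℤ, ε ≠ 0 → {n : ℕ | ∑ m, c m * l m ^ (ε * n) = 0}.Finite := by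
      intro ε hε
      refine Set.not_infinite.1 fun h => ?_
      refine hc (coeff_eq_zero_of_infinite_zeros c (fun m => l m ^ ε)
        (fun m => zpow_ne_zero _ (hl m)) (fun N hN => ?_) ?_ _)
      · simpa only [zpow_mul, zpow_natCast] using hsep (ε * N) (by positivity)
      · simpa only [zpow_mul, zpow_natCast] using h
    refine hinf ((((hfin 1 one_ne_zero).image fun n : ℕ => (n : ℤ)).union
      ((hfin (-1) (by simp)).image fun n : ℕ => -(n : ℤ))).subset fun n hn => ?_)
    rw [Set.mem_ofPred_eq, eval_cons_mul_zpow] at hn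
    obtain ⟨u, rfl | rfl⟩ := n.eq_nat_or_neg
    · exact Or.inl ⟨u, by simpa only [Set.mem_ofPred_eq, one_mul] using hn, rfl⟩
    · exact Or.inr ⟨u, by simpa only [Set.mem_ofPred_eq, neg_one_mul] using hn, rfl⟩
  · intro h j hj
    refine Set.infinite_univ ((h (MvPolynomial.X j) (MvPolynomial.X_ne_zero j)
      ⟨1, MvPolynomial.isHomogeneous_X k j⟩).subset fun n _ => ?_)
    rw [Set.mem_ofPred_eq, MvPolynomial.eval_X]
    induction j using Fin.cases with
    | zero => simpa using hj
    | succ i => simp [hj]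
end
end

section
/- Assume k has characteristic 0. Let t ≥ 2 and let p_2, …, p_t ∈ k^× generate a free abelian subgroup of k^× of rank t−1, and let a_0, …, a_t ∈ k, not all zero. Then the following are equivalent: (i) a_i ≠ 0 for every 1 ≤ i ≤ t; (ii) for every nonzero homogeneous polynomial F ∈ k[x_0,…,x_t], the set {n ∈ ℤ : F(a_0 + n·a_1, a_1, p_2^n a_2, …, p_t^n a_t) = 0} is finite (i.e. the orbit of the point (a_0 : ⋯ : a_t) under the automorphism of P^t given by the matrix with a single 2×2 unipotent Jordan block [[1,1],[0,1]] in the first two coordinates and diagonal entries p_2, …, p_t is critically dense). -/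
set_option synthInstance.maxHeartbeats 1000000
set_option maxHeartbeats 4000000

noncomputable section

section Strassman

variable {K : Type*} [NormedField K]

/-- The Newton coefficients of `f : ℕ → K` are bounded by `C ‖k!‖ σ ^ k`. -/
def NewtonBounded (σ C : ℝ) (f : ℕ → K) : Prop :=
  ∀ k : ℕ, ‖(fwdDiff 1)^[k] f 0‖ ≤ C * ‖(k.factorial : K)‖ * σ ^ k

theorem fwdDiff_iter_succ_zero_of_eq_mul {R : Type*} [CommRing R] {h g : ℕ → R} (h0 : h 0 = 0)
    (hg : ∀ n : ℕ, h (n + 1) = ((n + 1 : ℕ) : R) * g n) (k : ℕ) :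
    (fwdDiff 1)^[k + 1] h 0 = ((k + 1 : ℕ) : R) * (fwdDiff 1)^[k] g 0 := by
  rw [fwdDiff_iter_eq_sum_shift, fwdDiff_iter_eq_sum_shift, Finset.sum_range_succ']
  simp only [smul_eq_mul, mul_one, zero_add, h0, smul_zero, add_zero]
  rw [Finset.mul_sum]
  refine Finset.sum_congr rfl fun j _ => ?_
  rw [hg]
  have := congrArg (Nat.cast : ℕ → R) (Nat.add_one_mul_choose_eq k j)
  push_cast at this
  simp only [zsmul_eq_mul, Nat.add_sub_add_right]
  push_cast
  linear_combination -(-1) ^ (k - j) * g j * this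

theorem fwdDiff_iter_shift {R : Type*} [CommRing R] (f : ℕ → R) (k : ℕ) :
    (fwdDiff 1)^[k] (fun n => f (n + 1)) 0 =
      (fwdDiff 1)^[k + 1] f 0 + (fwdDiff 1)^[k] f 0 := by
  rw [fwdDiff_iter_comp_add, Function.iterate_succ_apply']
  simp [fwdDiff]

namespace NewtonBounded

variable {σ C : ℝ} {f g : ℕ → K}

theorem nonneg (hf : NewtonBounded σ C f) : 0 ≤ C := by
  have := (norm_nonneg _).trans (hf 0)
  simpa using this

theorem mono {C' : ℝ} (hσ : 0 ≤ σ) (hC : C ≤ C') (hf : NewtonBounded σ C f) :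
    NewtonBounded σ C' f := fun k => (hf k).trans (by gcongr)

theorem const_mul (hf : NewtonBounded σ C f) (c : K) :
    NewtonBounded σ (‖c‖ * C) (fun n => c * f n) := by
  intro k
  have : (fun n => c * f n) = c • f := rfl
  rw [this, fwdDiff_iter_const_smul, Pi.smul_apply, norm_smul, mul_assoc, mul_assoc, ← mul_assoc C]
  exact mul_le_mul_of_nonneg_left (hf k) (norm_nonneg c)

theorem div [CharZero K] (hf : NewtonBounded σ C f) :
    NewtonBounded σ (C * σ) (fun n => (f (n + 1) - f 0) / ((n + 1 : ℕ) : K)) := by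
  intro k
  have h1 : ((k + 1 : ℕ) : K) ≠ 0 := Nat.cast_ne_zero.2 k.succ_ne_zero
  have h := fwdDiff_iter_succ_zero_of_eq_mul (h := fun n => f n + - f 0)
    (g := fun n => (f (n + 1) - f 0) / ((n + 1 : ℕ) : K)) (by simp) (fun n => by
      have : ((n + 1 : ℕ) : K) ≠ 0 := Nat.cast_ne_zero.2 n.succ_ne_zero
      rw [mul_div_cancel₀ _ this, sub_eq_add_neg]) k
  have h2 : (fwdDiff 1)^[k + 1] (fun n => f n + - f 0) 0 = (fwdDiff 1)^[k + 1] f 0 := by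
    rw [Function.iterate_succ_apply, Function.iterate_succ_apply]
    have : fwdDiff 1 (fun n => f n + - f 0) = fwdDiff 1 f := by
      ext n
      simp [fwdDiff]
    rw [this]
  rw [h2] at h
  have h3 := hf (k + 1)
  rw [h, norm_mul, Nat.factorial_succ, Nat.cast_mul, norm_mul] at h3
  have h4 : 0 < ‖((k + 1 : ℕ) : K)‖ := norm_pos_iff.2 h1
  refine le_of_mul_le_mul_left (h3.trans_eq ?_) h4
  ring

variable [IsUltrametricDist K]

theorem add {C' : ℝ} (hσ : 0 ≤ σ) (hf : NewtonBounded σ C f) (hg : NewtonBounded σ C' g) :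
    NewtonBounded σ (max C C') (fun n => f n + g n) := by
  intro k
  have : (fun n => f n + g n) = f + g := rfl
  rw [this, fwdDiff_iter_add]
  refine (IsUltrametricDist.norm_add_le_max _ _).trans (max_le ?_ ?_)
  · exact (hf.mono hσ (le_max_left _ _)) k
  · exact (hg.mono hσ (le_max_right _ _)) k

theorem shift_one (hσ : 0 ≤ σ) (hσ1 : σ ≤ 1) (hf : NewtonBounded σ C f) :
    NewtonBounded σ C (fun n => f (n + 1)) := by
  intro k
  have hC := hf.nonneg
  rw [fwdDiff_iter_shift]
  refine (IsUltrametricDist.norm_add_le_max _ _).trans (max_le ((hf (k + 1)).trans ?_) (hf k))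
  rw [Nat.factorial_succ, Nat.cast_mul, norm_mul, pow_succ]
  have h1 := IsUltrametricDist.norm_natCast_le_one K (k + 1)
  calc C * (‖((k + 1 : ℕ) : K)‖ * ‖(k.factorial : K)‖) * (σ ^ k * σ)
      ≤ C * (1 * ‖(k.factorial : K)‖) * (σ ^ k * 1) := by gcongr
    _ = _ := by ring

theorem shift (hσ : 0 ≤ σ) (hσ1 : σ ≤ 1) (hf : NewtonBounded σ C f) (m : ℕ) :
    NewtonBounded σ C (fun n => f (n + m)) := by
  induction m with
  | zero => simpa using hf
  | succ m ih =>
    have := ih.shift_one hσ hσ1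
    simpa only [add_assoc, add_comm 1 m] using this

theorem natCast_mul (hσ : 0 < σ) (hσ1 : σ ≤ 1) (hf : NewtonBounded σ C f) :
    NewtonBounded σ (C / σ) (fun n => (n : K) * f n) := by
  have hC := hf.nonneg
  intro k
  cases k with
  | zero => simpa using div_nonneg hC hσ.le
  | succ k =>
    rw [fwdDiff_iter_succ_zero_of_eq_mul (g := fun n => f (n + 1)) (by simp) (fun n => rfl),
      norm_mul, Nat.factorial_succ, Nat.cast_mul, norm_mul]
    have := (hf.shift_one hσ.le hσ1) k
    calc _ ≤ ‖((k + 1 : ℕ) : K)‖ * (C * ‖(k.factorial : K)‖ * σ ^ k) := by gcongr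
      _ = _ := by rw [pow_succ]; field_simp

theorem norm_le (hσ : 0 ≤ σ) (hσ1 : σ ≤ 1) (hf : NewtonBounded σ C f) (n : ℕ) : ‖f n‖ ≤ C := by
  have h := shift_eq_sum_fwdDiff_iter 1 f n 0
  simp only [smul_eq_mul, mul_one, zero_add] at h
  rw [h]
  refine IsUltrametricDist.norm_sum_le_of_forall_le_of_nonneg hf.nonneg fun k _ => ?_
  rw [nsmul_eq_mul, norm_mul]
  have h1 := IsUltrametricDist.norm_natCast_le_one K (n.choose k)
  have h2 := IsUltrametricDist.norm_natCast_le_one K (k.factorial)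
  have hC := hf.nonneg
  calc ‖(n.choose k : K)‖ * ‖(fwdDiff 1)^[k] f 0‖ ≤ 1 * (C * ‖(k.factorial : K)‖ * σ ^ k) := by
        gcongr; exact hf k
    _ ≤ 1 * (C * 1 * 1) := by
        gcongr; exact pow_le_one₀ hσ hσ1
    _ = C := by ring

variable [CharZero K]

theorem norm_sub_le (hσ : 0 ≤ σ) (hσ1 : σ ≤ 1) (hf : NewtonBounded σ C f) (m n : ℕ) :
    ‖f (n + m) - f m‖ ≤ C * ‖(n : K)‖ := by
  have hC := hf.nonneg
  cases n with
  | zero => simp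
  | succ n =>
    have h1 : ((n + 1 : ℕ) : K) ≠ 0 := Nat.cast_ne_zero.2 n.succ_ne_zero
    have h4 : 0 < ‖((n + 1 : ℕ) : K)‖ := norm_pos_iff.2 h1
    have h := ((hf.shift hσ hσ1 m).div).norm_le hσ hσ1 n
    rw [norm_div, div_le_iff₀ h4] at h
    simp only [zero_add] at h
    refine h.trans ?_
    gcongr
    exact mul_le_of_le_one_right hC hσ1

theorem norm_le_mul_pow_of_infinite_zeros {π : ℕ} (hπ0 : 0 < π)
    (hπ : ‖(π : K)‖ < 1) (hσ : 0 ≤ σ) (hσ1 : σ ≤ 1)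
    (M : ℕ) (hf : NewtonBounded σ C f) (hz : {n | f n = 0}.Infinite) (n : ℕ) :
    ‖f n‖ ≤ C * σ ^ M := by
  induction M generalizing C f n with
  | zero => simpa using hf.norm_le hσ hσ1 n
  | succ M ih =>
    have hC := hf.nonneg
    obtain ⟨m, hm⟩ := hz.nonempty
    have hm : f m = 0 := hm
    have hg := (hf.shift hσ hσ1 m).div
    simp only [zero_add, hm, sub_zero] at hg
    have hgz : {n | f (n + 1 + m) / ((n + 1 : ℕ) : K) = 0}.Infinite := by
      intro hfin
      refine hz (((hfin.image fun n => n + 1 + m).union (Set.finite_Iic m)).subset ?_)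
      intro n hn
      rcases le_or_gt n m with h | h
      · exact Or.inr h
      · refine Or.inl ⟨n - m - 1, ?_, by simp only []; omega⟩
        have : n - m - 1 + 1 + m = n := by omega
        change f (n - m - 1 + 1 + m) / _ = 0
        rw [this, show f n = 0 from hn, zero_div]
    have hlarge : ∀ n, m < n → ‖f n‖ ≤ C * σ ^ (M + 1) := by
      intro n hn
      have h := ih hg hgz (n - m - 1)
      have e : n - m - 1 + 1 + m = n := by omega
      rw [e, norm_div] at h
      have h1 : ((n - m - 1 + 1 : ℕ) : K) ≠ 0 := Nat.cast_ne_zero.2 (Nat.succ_ne_zero _)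
      rw [div_le_iff₀ (norm_pos_iff.2 h1)] at h
      refine h.trans ?_
      have h2 := IsUltrametricDist.norm_natCast_le_one K (n - m - 1 + 1)
      calc _ ≤ C * σ * σ ^ M * 1 := by gcongr
        _ = _ := by ring
    have hlim : Filter.Tendsto (fun j : ℕ => max (C * σ ^ (M + 1)) (C * ‖(π : K)‖ ^ j))
        Filter.atTop (nhds (max (C * σ ^ (M + 1)) (C * 0))) :=
      tendsto_const_nhds.max
        ((tendsto_pow_atTop_nhds_zero_of_lt_one (norm_nonneg _) hπ).const_mul C)
    rw [mul_zero, max_eq_left (by positivity)] at hlim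
    refine ge_of_tendsto' hlim fun j => ?_
    have hpos : 0 < π ^ j := pow_pos hπ0 j
    have hsum : f n = f (π ^ j * (m + 1) + n) + -(f (π ^ j * (m + 1) + n) - f n) := by ring
    rw [hsum]
    refine (IsUltrametricDist.norm_add_le_max _ _).trans (max_le_max (hlarge _ ?_) ?_)
    · nlinarith
    · rw [norm_neg]
      refine (hf.norm_sub_le hσ hσ1 n _).trans ?_
      rw [Nat.cast_mul, norm_mul, Nat.cast_pow, norm_pow]
      have h2 := IsUltrametricDist.norm_natCast_le_one K (m + 1)
      calc _ ≤ C * (‖(π : K)‖ ^ j * 1) := by gcongr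
        _ = _ := by ring

theorem eq_zero_of_infinite_zeros {π : ℕ} (hπ0 : 0 < π)
    (hπ : ‖(π : K)‖ < 1) (hσ : 0 ≤ σ) (hσ1 : σ < 1)
    (hf : NewtonBounded σ C f) (hz : {n | f n = 0}.Infinite) (n : ℕ) : f n = 0 := by
  have hlim : Filter.Tendsto (fun M : ℕ => C * σ ^ M) Filter.atTop (nhds (C * 0)) :=
    (tendsto_pow_atTop_nhds_zero_of_lt_one hσ hσ1).const_mul C
  rw [mul_zero] at hlim
  exact norm_le_zero_iff.1 (ge_of_tendsto' hlim fun M =>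
    hf.norm_le_mul_pow_of_infinite_zeros hπ0 hπ hσ hσ1.le M hz n)

end NewtonBounded

end Strassman

section ExponentialPolynomial

open Polynomial

variable {K : Type*}

theorem fwdDiff_iter_geometric [CommRing K] (μ : K) (k : ℕ) :
    (fwdDiff 1)^[k] (fun n : ℕ => μ ^ n) = fun n => (μ - 1) ^ k * μ ^ n := by
  induction k with
  | zero => simp
  | succ k ih =>
    rw [Function.iterate_succ_apply', ih]
    ext n
    simp only [fwdDiff]
    ring

theorem exists_newtonBounded_eval_mul_pow [NormedField K] [IsUltrametricDist K] {σ : ℝ}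
    (hσ : 0 < σ) (hσ1 : σ ≤ 1) {μ : K}
    (hμ : ∀ k : ℕ, ‖μ - 1‖ ^ k ≤ ‖(k.factorial : K)‖ * σ ^ k) (Q : K[X]) :
    ∃ C, NewtonBounded σ C fun n : ℕ => Q.eval (n : K) * μ ^ n := by
  induction Q using Polynomial.induction_on with
  | C a =>
    have : NewtonBounded σ 1 fun n : ℕ => μ ^ n := fun k => by
      rw [fwdDiff_iter_geometric]
      simpa using hμ k
    exact ⟨_, by simpa using this.const_mul a⟩
  | add P Q hP hQ =>
    obtain ⟨C, hC⟩ := hP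
    obtain ⟨D, hD⟩ := hQ
    exact ⟨_, by simpa [add_mul] using hC.add hσ.le hD⟩
  | monomial n a h =>
    obtain ⟨D, hD⟩ := h
    refine ⟨D / σ, ?_⟩
    convert hD.natCast_mul hσ hσ1 using 2 with m
    simp only [eval_mul, eval_C, eval_pow, eval_X]
    ring

theorem shift_sub_smul_pow_eval_mul_pow [CommRing K] (μ : K) (h : ℕ → K) (N : ℕ) :
    ((LinearMap.funLeft K K Nat.succ - μ • (1 : Module.End K (ℕ → K))) ^ N)
      (fun n => μ ^ n * h n) = fun n => μ ^ (n + N) * (fwdDiff 1)^[N] h n := by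
  induction N with
  | zero => simp
  | succ N ih =>
    rw [pow_succ', Module.End.mul_apply, ih, Function.iterate_succ_apply']
    ext n
    simp only [LinearMap.sub_apply, LinearMap.smul_apply, Module.End.one_apply, Pi.sub_apply,
      Pi.smul_apply, LinearMap.funLeft_apply, smul_eq_mul, fwdDiff, Nat.succ_eq_add_one]
    ring

theorem fwdDiff_iter_eval_natCast [CommRing K] (Q : K[X]) :
    (fwdDiff 1)^[Q.natDegree + 1] (fun n : ℕ => Q.eval (n : K)) = 0 := by
  ext n
  have := congrFun (Polynomial.fwdDiff_iter_degree_add_one_eq_zero Q) (n : K)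
  rw [fwdDiff_iter_eq_sum_shift] at this ⊢
  simpa using this

theorem eq_zero_of_forall_sum_eval_mul_pow_eq_zero [Field K] [CharZero K] {ι : Type*} [Fintype ι]
    (Q : ι → K[X]) {μ : ι → K} (hμ0 : ∀ i, μ i ≠ 0) (hμ : Function.Injective μ)
    (h : ∀ n : ℕ, ∑ i, (Q i).eval (n : K) * μ i ^ n = 0) (i : ι) :
    ∀ n : ℕ, (Q i).eval (n : K) = 0 := by
  have hind := (Module.End.independent_maxGenEigenspace
    (LinearMap.funLeft K K Nat.succ : Module.End K (ℕ → K))).comp hμ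
  rw [iSupIndep_iff_finsetSum_eq_zero_imp_eq_zero] at hind
  have key := hind Finset.univ (fun i n => μ i ^ n * (Q i).eval (n : K)) (fun i _ => ?_) ?_ i
    (Finset.mem_univ i)
  · intro n
    have := congrFun key n
    exact (mul_eq_zero.1 this).resolve_left (pow_ne_zero _ (hμ0 i))
  · rw [Function.comp_apply, Module.End.mem_maxGenEigenspace]
    refine ⟨(Q i).natDegree + 1, ?_⟩
    rw [shift_sub_smul_pow_eval_mul_pow, fwdDiff_iter_eval_natCast]
    ext n
    simp
  · ext n
    simpa [mul_comm] using h n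

theorem eq_zero_of_forall_eval_linear_natCast_eq_zero [Field K] [CharZero K] (P : K[X]) {r : ℕ}
    (hr : 0 < r) (j : ℕ) (h : ∀ n : ℕ, P.eval ((r * n + j : ℕ) : K) = 0) : P = 0 := by
  refine Polynomial.eq_zero_of_infinite_isRoot P
    (Set.infinite_of_injective_forall_mem (f := fun n : ℕ => ((r * n + j : ℕ) : K)) ?_ h)
  intro a b hab
  have := Nat.cast_injective hab
  exact Nat.eq_of_mul_eq_mul_left hr (Nat.add_right_cancel this)

theorem exponential_polynomial_eq_zero_of_norm [NormedField K] [IsUltrametricDist K] [CharZero K]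
    {π : ℕ} (hπ0 : 0 < π) (hπ : ‖(π : K)‖ < 1) {σ : ℝ} (hσ : 0 < σ) (hσ1 : σ < 1)
    {ι : Type*} [Fintype ι] (P : ι → K[X]) {l : ι → K} (hl : ∀ i, l i ≠ 0) {r : ℕ} (hr : 0 < r)
    (hlr : ∀ i (k : ℕ), ‖l i ^ r - 1‖ ^ k ≤ ‖(k.factorial : K)‖ * σ ^ k)
    (hinj : Function.Injective fun i => l i ^ r)
    (hz : {n : ℕ | ∑ i, (P i).eval (n : K) * l i ^ n = 0}.Infinite) (i : ι) : P i = 0 := by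
  classical
  obtain ⟨j, hj⟩ : ∃ j : ℕ,
      {m : ℕ | ∑ i, (P i).eval ((r * m + j : ℕ) : K) * l i ^ (r * m + j) = 0}.Infinite := by
    by_contra! hfin
    refine hz (((Set.finite_Iio r).biUnion fun j _ =>
      (hfin j).image fun m => r * m + j).subset fun n hn => ?_)
    simp only [Set.mem_iUnion]
    refine ⟨n % r, Nat.mod_lt _ hr, n / r, ?_, Nat.div_add_mod n r⟩
    change ∑ i, _ = _
    rw [Nat.div_add_mod]
    exact hn
  let Q : ι → K[X] := fun i => C (l i ^ j) * (P i).comp (C (r : K) * X + C (j : K))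
  have hQ : ∀ i (m : ℕ), (Q i).eval (m : K) = l i ^ j * (P i).eval ((r * m + j : ℕ) : K) := by
    intro i m
    simp [Q]
  have hsum : ∀ m : ℕ, ∑ i, (P i).eval ((r * m + j : ℕ) : K) * l i ^ (r * m + j) =
      ∑ i, (Q i).eval (m : K) * (l i ^ r) ^ m := by
    intro m
    refine Finset.sum_congr rfl fun i _ => ?_
    rw [hQ, pow_add, pow_mul]
    ring
  simp only [hsum] at hj
  obtain ⟨D, hD⟩ : ∃ D, NewtonBounded σ D fun m : ℕ =>
      ∑ i, (Q i).eval (m : K) * (l i ^ r) ^ m := by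
    refine Finset.induction_on (Finset.univ : Finset ι) ⟨0, fun k => ?_⟩ ?_
    · simp only [Finset.sum_empty]
      rw [fwdDiff_iter_eq_sum_shift]
      simp
    · rintro i s his ⟨D, hD⟩
      obtain ⟨C, hC⟩ := exists_newtonBounded_eval_mul_pow hσ hσ1.le (hlr i) (Q i)
      exact ⟨_, by simpa [Finset.sum_insert his] using hC.add hσ.le hD⟩
  have h0 := hD.eq_zero_of_infinite_zeros hπ0 hπ hσ.le hσ1 hj
  have h1 := eq_zero_of_forall_sum_eval_mul_pow_eq_zero Q (fun i => pow_ne_zero r (hl i)) hinj h0 i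
  refine eq_zero_of_forall_eval_linear_natCast_eq_zero (P i) hr j fun m => ?_
  have := h1 m
  rw [hQ] at this
  exact (mul_eq_zero.1 this).resolve_left (pow_ne_zero _ (hl i))

end ExponentialPolynomial

section Padic

open Polynomial

variable {p : ℕ} [Fact p.Prime]

theorem PadicAlgCl.norm_algebraMap_padicInt (x : ℤ_[p]) :
    ‖algebraMap ℤ_[p] (PadicAlgCl p) x‖ = ‖x‖ := by
  rw [IsScalarTower.algebraMap_apply ℤ_[p] ℚ_[p] (PadicAlgCl p)]
  exact PadicAlgCl.norm_extends p _

theorem PadicAlgCl.algebraMap_padicInt_injective :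
    Function.Injective (algebraMap ℤ_[p] (PadicAlgCl p)) := by
  rw [injective_iff_map_eq_zero]
  intro x hx
  rw [← norm_eq_zero, ← PadicAlgCl.norm_algebraMap_padicInt, hx, norm_zero]

theorem PadicAlgCl.norm_le_one_of_isIntegral {x : PadicAlgCl p} (hx : IsIntegral ℤ_[p] x) :
    ‖x‖ ≤ 1 := by
  obtain ⟨f, hf, hfx⟩ := hx
  by_contra! h
  rw [← aeval_def, aeval_eq_sum_range, Finset.sum_range_succ, hf.coeff_natDegree, one_smul,
    add_eq_zero_iff_eq_neg'] at hfx
  have h1 : ‖x‖ ^ f.natDegree = ‖∑ i ∈ Finset.range f.natDegree, f.coeff i • x ^ i‖ := by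
    rw [← norm_pow, hfx, norm_neg]
  rcases Nat.eq_zero_or_pos f.natDegree with h0 | h0
  · simp [h0] at h1
  have h2 : ‖∑ i ∈ Finset.range f.natDegree, f.coeff i • x ^ i‖ ≤ ‖x‖ ^ (f.natDegree - 1) := by
    refine IsUltrametricDist.norm_sum_le_of_forall_le_of_nonneg (by positivity) fun i hi => ?_
    rw [Algebra.smul_def, norm_mul, PadicAlgCl.norm_algebraMap_padicInt, norm_pow]
    have := PadicInt.norm_le_one (f.coeff i)
    have hi := Finset.mem_range.1 hi
    calc ‖f.coeff i‖ * ‖x‖ ^ i ≤ 1 * ‖x‖ ^ (f.natDegree - 1) := by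
          gcongr
          · exact h.le
          · omega
      _ = _ := one_mul _
  rw [← h1] at h2
  exact absurd h2 (not_le.2 (pow_lt_pow_right₀ h (by omega)))

theorem PadicAlgCl.exists_norm_pow_sub_one_le {x : PadicAlgCl p} (hx : IsIntegral ℤ_[p] x)
    (hx1 : ‖x‖ = 1) (N : ℕ) : ∃ r : ℕ, 0 < r ∧ ‖x ^ r - 1‖ ≤ (p : ℝ) ^ (-N : ℤ) := by
  obtain ⟨f, hf, hfx⟩ := hx
  rw [← aeval_def] at hfx
  have hrem : ∀ a : ℕ, x ^ a = aeval x (X ^ a %ₘ f) := by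
    intro a
    have := congrArg (aeval x) (modByMonic_add_div (X ^ a : ℤ_[p][X]) f)
    rw [map_add, map_mul, hfx, zero_mul, add_zero] at this
    rw [this, map_pow, aeval_X]
  let c : ℕ → Fin f.natDegree → ZMod (p ^ N) := fun a i =>
    PadicInt.toZModPow N ((X ^ a %ₘ f).coeff i)
  have : NeZero (p ^ N) := ⟨pow_ne_zero _ (Fact.out : p.Prime).ne_zero⟩
  obtain ⟨a, b, hab, hc⟩ : ∃ a b, a < b ∧ c a = c b := by
    obtain ⟨a, b, hne, h⟩ := Finite.exists_ne_map_eq_of_infinite c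
    rcases lt_or_gt_of_ne hne with h' | h'
    · exact ⟨a, b, h', h⟩
    · exact ⟨b, a, h', h.symm⟩
  refine ⟨b - a, Nat.sub_pos_of_lt hab, ?_⟩
  have hfac : ‖x ^ (b - a) - 1‖ = ‖x ^ b - x ^ a‖ := by
    have : x ^ b - x ^ a = x ^ a * (x ^ (b - a) - 1) := by
      rw [mul_sub, ← pow_add, Nat.add_sub_cancel' hab.le, mul_one]
    rw [this, norm_mul, norm_pow, hx1, one_pow, one_mul]
  rw [hfac, hrem, hrem, ← map_sub, aeval_eq_sum_range]
  refine IsUltrametricDist.norm_sum_le_of_forall_le_of_nonneg (by positivity) fun i _ => ?_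
  rw [Algebra.smul_def, norm_mul, PadicAlgCl.norm_algebraMap_padicInt, norm_pow, hx1, one_pow,
    mul_one, coeff_sub]
  rw [PadicInt.norm_le_pow_iff_mem_span_pow, ← PadicInt.ker_toZModPow, RingHom.mem_ker, map_sub,
    sub_eq_zero]
  by_cases hi : i < f.natDegree
  · exact (congrFun hc ⟨i, hi⟩).symm
  · have hz : ∀ a : ℕ, (X ^ a %ₘ f).coeff i = 0 := fun a => by
      by_cases hf1 : f = 1
      · simp [hf1]
      · exact coeff_eq_zero_of_natDegree_lt
          ((natDegree_modByMonic_lt _ hf hf1).trans_le (not_lt.1 hi))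
    rw [hz, hz]

theorem PadicAlgCl.norm_natCast_prime : ‖(p : PadicAlgCl p)‖ = (p : ℝ)⁻¹ := by
  rw [← map_natCast (algebraMap ℚ_[p] (PadicAlgCl p)), PadicAlgCl.norm_extends, Padic.norm_p]

theorem PadicAlgCl.inv_pow_le_norm_factorial (k : ℕ) :
    ((p : ℝ)⁻¹) ^ k ≤ ‖(k.factorial : PadicAlgCl p)‖ := by
  rw [← map_natCast (algebraMap ℚ_[p] (PadicAlgCl p)), PadicAlgCl.norm_extends,
    Padic.norm_eq_zpow_neg_valuation (Nat.cast_ne_zero.2 k.factorial_ne_zero),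
    Padic.valuation_natCast, zpow_neg, zpow_natCast, inv_pow]
  have hp : (1 : ℝ) ≤ p := by exact_mod_cast (Fact.out : p.Prime).one_le
  gcongr
  exact padicValNat_factorial_le p k

theorem PadicAlgCl.norm_pow_sub_one_le {x : PadicAlgCl p} (hx : ‖x‖ = 1) (m : ℕ) :
    ‖x ^ m - 1‖ ≤ ‖x - 1‖ := by
  rw [← mul_geom_sum, norm_mul]
  refine mul_le_of_le_one_right (norm_nonneg _) ?_
  refine IsUltrametricDist.norm_sum_le_of_forall_le_of_nonneg zero_le_one fun i _ => ?_
  rw [norm_pow, hx, one_pow]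

theorem PadicAlgCl.exists_common_norm_pow_sub_one_le {ι : Type*} [Fintype ι]
    {x : ι → PadicAlgCl p} (hx : ∀ i, IsIntegral ℤ_[p] (x i)) (hx1 : ∀ i, ‖x i‖ = 1) (N : ℕ) :
    ∃ r : ℕ, 0 < r ∧ ∀ i, ‖x i ^ r - 1‖ ≤ (p : ℝ) ^ (-N : ℤ) := by
  choose r hr hxr using fun i => PadicAlgCl.exists_norm_pow_sub_one_le (hx i) (hx1 i) N
  refine ⟨∏ i, r i, Finset.prod_pos fun i _ => hr i, fun i => ?_⟩
  obtain ⟨m, hm⟩ := Finset.dvd_prod_of_mem r (Finset.mem_univ i)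
  rw [hm, pow_mul]
  exact (PadicAlgCl.norm_pow_sub_one_le (by rw [norm_pow, hx1, one_pow]) m).trans (hxr i)

theorem PadicAlgCl.exponential_polynomial_eq_zero {ι : Type*} [Fintype ι]
    (P : ι → (PadicAlgCl p)[X]) {l : ι → PadicAlgCl p} (hl : ∀ i, IsIntegral ℤ_[p] (l i))
    (hl1 : ∀ i, ‖l i‖ = 1) (hinj : ∀ r : ℕ, 0 < r → Function.Injective fun i => l i ^ r)
    (hz : {n : ℕ | ∑ i, (P i).eval (n : PadicAlgCl p) * l i ^ n = 0}.Infinite) (i : ι) :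
    P i = 0 := by
  have hp : (1 : ℝ) < p := by exact_mod_cast (Fact.out : p.Prime).one_lt
  obtain ⟨r, hr, hlr⟩ := PadicAlgCl.exists_common_norm_pow_sub_one_le hl hl1 2
  refine exponential_polynomial_eq_zero_of_norm (π := p) (Fact.out : p.Prime).pos
    (by rw [PadicAlgCl.norm_natCast_prime]; exact inv_lt_one_of_one_lt₀ hp) (σ := (p : ℝ)⁻¹)
    (by positivity) (inv_lt_one_of_one_lt₀ hp) P
    (fun i => norm_ne_zero_iff.1 (by simp [hl1])) hr (fun i k => ?_) (hinj r hr) hz i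
  calc ‖l i ^ r - 1‖ ^ k ≤ ((p : ℝ) ^ (-2 : ℤ)) ^ k := by
        gcongr
        exact_mod_cast hlr i
    _ = ((p : ℝ)⁻¹) ^ k * ((p : ℝ)⁻¹) ^ k := by
        rw [← mul_pow]
        congr 1
        rw [zpow_neg, ← mul_inv]
        norm_cast
        rw [pow_two]
    _ ≤ _ := by
        gcongr
        exact PadicAlgCl.inv_pow_le_norm_factorial k

end Padic

section Embedding

open MvPolynomial

theorem PadicInt.uncountable (p : ℕ) [Fact p.Prime] : Uncountable ℤ_[p] := by
  rw [← not_countable_iff]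
  intro h
  have h1 : Countable ℚ_[p] :=
    Function.Surjective.countable (f := fun x : ℤ_[p] × ℤ_[p] =>
      algebraMap ℤ_[p] ℚ_[p] x.1 / algebraMap ℤ_[p] ℚ_[p] x.2) fun z => by
        obtain ⟨x, y, -, hxy⟩ := IsFractionRing.div_surjective (A := ℤ_[p]) z
        exact ⟨(x, y), hxy⟩
  have h2 := continuum_le_cardinal_of_nontriviallyNormedField ℚ_[p]
  exact absurd (Cardinal.mk_le_aleph0_iff.2 h1)
    (not_le.2 (Cardinal.aleph0_lt_continuum.trans_le h2))

theorem PadicInt.exists_algebraicIndependent (p : ℕ) [Fact p.Prime] (ι : Type*) [Finite ι] :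
    ∃ w : ι → ℤ_[p], AlgebraicIndependent ℤ w := by
  obtain ⟨B, hB⟩ := exists_isTranscendenceBasis ℤ ℤ_[p]
  have hinf : Infinite B := by
    by_contra hfin
    rw [not_infinite_iff_finite] at hfin
    have h1 : Countable (MvPolynomial B ℤ) := by
      rw [← Cardinal.mk_le_aleph0_iff]
      exact MvPolynomial.cardinalMk_le_max_lift.trans (by simp)
    have h2 : Countable (Algebra.adjoin ℤ (Set.range ((↑) : B → ℤ_[p]))) :=
      hB.1.aevalEquiv.toEquiv.countable_iff.1 h1
    have halg := hB.isAlgebraic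
    have h3 := Algebraic.countable (Algebra.adjoin ℤ (Set.range ((↑) : B → ℤ_[p]))) ℤ_[p]
    have h4 : {x : ℤ_[p] | IsAlgebraic (Algebra.adjoin ℤ (Set.range ((↑) : B → ℤ_[p]))) x} =
        Set.univ := Set.eq_univ_of_forall fun x => halg.isAlgebraic x
    rw [h4, Set.countable_univ_iff] at h3
    exact (PadicInt.uncountable p).not_countable h3
  obtain ⟨n, ⟨e⟩⟩ := Finite.exists_equiv_fin ι
  refine ⟨fun i => (Infinite.natEmbedding B (e i) : B), hB.1.comp _ ?_⟩
  exact (Infinite.natEmbedding B).injective.comp (Fin.val_injective.comp e.injective)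

theorem PadicInt.exists_algebraicIndependent_isUnit_aeval {ι : Type*} [Finite ι]
    {q : MvPolynomial ι ℤ} (hq : q ≠ 0) :
    ∃ (p : ℕ) (_ : Fact p.Prime) (z : ι → ℤ_[p]),
      AlgebraicIndependent ℤ z ∧ IsUnit (aeval z q) := by
  obtain ⟨a, ha⟩ : ∃ a : ι → ℤ, eval a q ≠ 0 := by
    by_contra! h
    exact hq (MvPolynomial.funext fun a => by rw [h, map_zero])
  obtain ⟨p, hpa, hp⟩ := Nat.exists_infinite_primes ((eval a q).natAbs + 1)
  have : Fact p.Prime := ⟨hp⟩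
  obtain ⟨w, hw⟩ := PadicInt.exists_algebraicIndependent p ι
  refine ⟨p, ⟨hp⟩, fun i => Polynomial.aeval (w i)
    (Polynomial.C (p : ℤ) * Polynomial.X + Polynomial.C (a i)),
    hw.polynomial_aeval_of_transcendental fun i => ?_, ?_⟩
  · have hp0 : (p : ℤ) ≠ 0 := Nat.cast_ne_zero.2 hp.ne_zero
    have := (Polynomial.transcendental_X ℤ).aeval
      (Polynomial.C (p : ℤ) * Polynomial.X + Polynomial.C (a i))
      (by rw [Polynomial.natDegree_linear hp0]; exact one_ne_zero)
      (by rw [Polynomial.leadingCoeff_linear hp0]; exact mem_nonZeroDivisors_of_ne_zero hp0)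
    rwa [Polynomial.aeval_X_left_apply] at this
  · by_contra hu
    have hmem : PadicInt.toZMod (aeval (fun i => Polynomial.aeval (w i)
        (Polynomial.C (p : ℤ) * Polynomial.X + Polynomial.C (a i))) q) = 0 := by
      rw [← RingHom.mem_ker, PadicInt.ker_toZMod]
      exact (IsLocalRing.mem_maximalIdeal _).2 hu
    rw [aeval_def, ← MvPolynomial.coe_eval₂Hom, ← RingHom.comp_apply,
      MvPolynomial.comp_eval₂Hom] at hmem
    have h2 : eval₂Hom (PadicInt.toZMod.comp (algebraMap ℤ ℤ_[p])) (fun i => PadicInt.toZMod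
        (Polynomial.aeval (w i) (Polynomial.C (p : ℤ) * Polynomial.X + Polynomial.C (a i)))) q =
        Int.castRingHom (ZMod p) (eval a q) := by
      rw [MvPolynomial.eval, ← RingHom.comp_apply, MvPolynomial.comp_eval₂Hom]
      congr 2
      · exact Subsingleton.elim _ _
      · ext i
        simp
    have h3 := (ZMod.intCast_zmod_eq_zero_iff_dvd (eval a q) p).1 (h2.symm.trans hmem)
    have := Nat.le_of_dvd (Int.natAbs_pos.2 ha) (Int.natCast_dvd.1 h3)
    omega

theorem exists_injective_ringHom_of_isAlgebraic {A R L : Type*} [CommRing A] [IsDomain A]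
    [CommRing R] [IsDomain R] [Field L] [IsAlgClosed L] [Algebra A R]
    (hinj : Function.Injective (algebraMap A R)) [Algebra.IsAlgebraic A R] (ψ : A →+* L)
    (hψ : Function.Injective ψ) :
    ∃ φ : R →+* L, Function.Injective φ ∧ ∀ a, φ (algebraMap A R a) = ψ a := by
  let _ : Algebra A L := ψ.toAlgebra
  have : FaithfulSMul A R := (faithfulSMul_iff_algebraMap_injective A R).2 hinj
  have : FaithfulSMul A L := (faithfulSMul_iff_algebraMap_injective A L).2 hψ
  have : Module.IsTorsionFree A R := inferInstance
  have : Module.IsTorsionFree A L := inferInstance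
  let f : R →ₐ[A] L := IsAlgClosed.lift
  refine ⟨f, ?_, fun a => f.commutes a⟩
  rw [injective_iff_map_eq_zero]
  intro x hx
  by_contra hx0
  obtain ⟨a, ha, y, hy⟩ := (Algebra.IsAlgebraic.isAlgebraic (R := A) x).exists_nonzero_dvd
    (mem_nonZeroDivisors_of_ne_zero hx0)
  have := f.commutes a
  rw [hy, map_mul, show f x = 0 from hx, zero_mul] at this
  exact ha (hψ (this.symm.trans (map_zero ψ).symm))

theorem exists_padicAlgCl_embedding (R : Type*) [CommRing R] [IsDomain R] [CharZero R]
    [Algebra.FiniteType ℤ R] :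
    ∃ (p : ℕ) (_ : Fact p.Prime) (φ : R →+* PadicAlgCl p),
      Function.Injective φ ∧ ∀ x, IsIntegral ℤ_[p] (φ x) := by
  obtain ⟨T, hT⟩ := Algebra.FiniteType.out (R := ℤ) (A := R)
  have hTalg : Algebra.IsAlgebraic (Algebra.adjoin ℤ (T : Set R)) R := by
    rw [hT]
    exact ⟨fun x => isAlgebraic_algebraMap (⟨x, trivial⟩ : (⊤ : Subalgebra ℤ R))⟩
  obtain ⟨s, -, hsT, hs⟩ := exists_isTranscendenceBasis_between (R := ℤ) (A := R) ∅ (T : Set R)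
    (Set.empty_subset _) ((algebraicIndependent_empty_iff ℤ R).2
      (FaithfulSMul.algebraMap_injective ℤ R))
  have : Finite s := (T.finite_toSet.subset hsT).to_subtype
  have halg := hs.isAlgebraic
  obtain ⟨c, hc0, hc⟩ := Algebra.IsAlgebraic.exists_integral_multiples
    (R := Algebra.adjoin ℤ (Set.range ((↑) : s → R))) T
  let e := hs.1.aevalEquiv
  obtain ⟨p, hp, z, hz, hu⟩ := PadicInt.exists_algebraicIndependent_isUnit_aeval
    (q := e.symm c) (by simpa using hc0)
  let ψ : Algebra.adjoin ℤ (Set.range ((↑) : s → R)) →+* ℤ_[p] :=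
    ((aeval z : MvPolynomial s ℤ →ₐ[ℤ] ℤ_[p]) : MvPolynomial s ℤ →+* ℤ_[p]).comp
      (e.symm : Algebra.adjoin ℤ (Set.range ((↑) : s → R)) →+* MvPolynomial s ℤ)
  have hψ : Function.Injective ψ := Function.Injective.comp (g := aeval z) hz e.symm.injective
  have hψu : IsUnit (ψ c) := hu
  have hψL : Function.Injective ((algebraMap ℤ_[p] (PadicAlgCl p)).comp ψ) := by
    rw [RingHom.coe_comp]
    exact PadicAlgCl.algebraMap_padicInt_injective.comp hψ
  obtain ⟨φ, hφ, hφψ⟩ := exists_injective_ringHom_of_isAlgebraic (L := PadicAlgCl p)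
    (A := Algebra.adjoin ℤ (Set.range ((↑) : s → R))) (R := R) Subtype.val_injective
    ((algebraMap ℤ_[p] (PadicAlgCl p)).comp ψ) hψL
  refine ⟨p, hp, φ, hφ, fun x => ?_⟩
  have hTint : ∀ t ∈ T, IsIntegral ℤ_[p] (φ t) := by
    intro t ht
    have h1 : IsIntegral ℤ_[p] (φ (c • t)) := by
      obtain ⟨f, hf, hft⟩ := hc t ht
      refine ⟨f.map ψ, hf.map ψ, ?_⟩
      rw [Polynomial.eval₂_map]
      have := congrArg φ hft
      rw [map_zero, Polynomial.hom_eval₂] at this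
      have hcomp : (algebraMap ℤ_[p] (PadicAlgCl p)).comp ψ = φ.comp (algebraMap _ R) :=
        RingHom.ext fun a => (hφψ a).symm
      rw [hcomp]
      exact this
    obtain ⟨u, hu⟩ := hψu
    have h2 : φ t = algebraMap ℤ_[p] (PadicAlgCl p) (↑u⁻¹ : ℤ_[p]) * φ (c • t) := by
      rw [Algebra.smul_def, map_mul, hφψ, RingHom.comp_apply, ← hu, ← mul_assoc, ← map_mul,
        Units.inv_mul, map_one, one_mul]
    rw [h2]
    exact isIntegral_algebraMap.mul h1
  have hx : x ∈ Algebra.adjoin ℤ (T : Set R) := hT ▸ trivial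
  induction hx using Algebra.adjoin_induction with
  | mem t ht => exact hTint t ht
  | algebraMap n =>
    rw [show algebraMap ℤ R n = (n : R) from rfl, map_intCast]
    rw [← map_intCast (algebraMap ℤ_[p] (PadicAlgCl p))]
    exact isIntegral_algebraMap
  | add a b _ _ ha hb => rw [map_add]; exact ha.add hb
  | mul a b _ _ ha hb => rw [map_mul]; exact ha.mul hb

end Embedding

section ExponentialPolynomial

open Polynomial

/-- A weak form of the Skolem–Mahler–Lech theorem: a nondegenerate exponential polynomial with
infinitely many zeros in `ℕ` is trivial. -/
theorem exponential_polynomial_eq_zero {k ι : Type*} [Field k] [CharZero k] [Fintype ι]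
    (P : ι → k[X]) {l : ι → k} (hl0 : ∀ i, l i ≠ 0)
    (hinj : ∀ r : ℕ, 0 < r → Function.Injective fun i => l i ^ r)
    (hz : {n : ℕ | ∑ i, (P i).eval (n : k) * l i ^ n = 0}.Infinite) (i : ι) : P i = 0 := by
  let T : Set k := (Set.range l ∪ Set.range fun i => (l i)⁻¹) ∪ ⋃ i, ((P i).coeffs : Set k)
  have hT : T.Finite := ((Set.finite_range _).union (Set.finite_range _)).union
    (Set.finite_iUnion fun i => Finset.finite_toSet _)
  let S := Algebra.adjoin ℤ T
  have : Algebra.FiniteType ℤ S := .adjoin_of_finite hT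
  have : CharZero S := charZero_of_injective_algebraMap (FaithfulSMul.algebraMap_injective ℤ S)
  have hTS : T ⊆ S := Algebra.subset_adjoin
  have hl : ∀ i, l i ∈ S := fun i => hTS (Or.inl (Or.inl ⟨i, rfl⟩))
  have hl' : ∀ i, (l i)⁻¹ ∈ S := fun i => hTS (Or.inl (Or.inr ⟨i, rfl⟩))
  have hP : ∀ i, P i ∈ lifts (algebraMap S k) := by
    intro i
    rw [lifts_iff_coeff_lifts]
    intro n
    by_cases hn : (P i).coeff n = 0
    · exact ⟨0, by rw [hn, map_zero]⟩
    · exact ⟨⟨(P i).coeff n, hTS (Or.inr (Set.mem_iUnion.2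
        ⟨i, coeff_mem_coeffs hn⟩))⟩, rfl⟩
  simp only [mem_lifts] at hP
  choose Q hQ using hP
  let m : ι → S := fun i => ⟨l i, hl i⟩
  let m' : ι → S := fun i => ⟨(l i)⁻¹, hl' i⟩
  have hm : ∀ i, m i * m' i = 1 := fun i => Subtype.ext (mul_inv_cancel₀ (hl0 i))
  obtain ⟨p, hp, φ, hφ, hφint⟩ := exists_padicAlgCl_embedding S
  have hnorm : ∀ x, ‖φ x‖ ≤ 1 := fun x => PadicAlgCl.norm_le_one_of_isIntegral (hφint x)
  have hzero : (Q i).map φ = 0 := by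
    refine PadicAlgCl.exponential_polynomial_eq_zero (fun i => (Q i).map φ)
      (l := fun i => φ (m i)) (fun i => hφint _) (fun i => ?_) (fun r hr i j hij => ?_)
      (hz.mono fun n hn => ?_) i
    · have h1 : ‖φ (m i)‖ * ‖φ (m' i)‖ = 1 := by
        rw [← norm_mul, ← map_mul, hm, map_one, norm_one]
      exact le_antisymm (hnorm _) (h1 ▸ mul_le_of_le_one_right (norm_nonneg _) (hnorm _))
    · simp only [← map_pow] at hij
      exact hinj r hr (congrArg Subtype.val (hφ hij))
    · have h1 : ∑ i, (Q i).eval (n : S) * m i ^ n = 0 := by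
        apply FaithfulSMul.algebraMap_injective S k
        rw [map_sum, map_zero, ← show _ = (0 : k) from hn]
        refine Finset.sum_congr rfl fun i _ => ?_
        rw [map_mul, map_pow, ← eval_natCast_map, hQ]
        rfl
      have h2 : φ (∑ i, (Q i).eval (n : S) * m i ^ n) = 0 := by rw [h1, map_zero]
      simp only [map_sum, map_mul, map_pow, ← eval_natCast_map] at h2
      exact h2
  rw [← hQ i, (Polynomial.map_eq_zero_iff hφ).1 hzero, Polynomial.map_zero]

end ExponentialPolynomial

section CriticalDensity

open MvPolynomial

variable {k : Type*} [Field k]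

theorem MvPolynomial.IsHomogeneous.eval_smul {σ : Type*} {F : MvPolynomial σ k} {d : ℕ}
    (hF : F.IsHomogeneous d) (c : k) (v : σ → k) : eval (c • v) F = c ^ d * eval v F := by
  rw [eval_eq, eval_eq, Finset.mul_sum]
  refine Finset.sum_congr rfl fun m hm => ?_
  have hd : ∑ i ∈ m.support, m i = d := by
    have := hF (mem_support_iff.1 hm)
    rwa [Finsupp.weight_apply, Finsupp.sum, Finset.sum_congr rfl fun i _ => by
      rw [Pi.one_apply, smul_eq_mul, mul_one]] at this
  simp only [Pi.smul_apply, smul_eq_mul, mul_pow, Finset.prod_mul_distrib,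
    Finset.prod_pow_eq_pow_sum, hd]
  ring

/-- The restriction of `F` to the affine chart `x₁ = a₁`, in the coordinates `X` and `yᵢ` with
`x₀ = a₀ + c X` and `xᵢ = bᵢ yᵢ`. -/
def jordanChart {s : ℕ} (a0 c a1 : k) (b : Fin s → k) (F : MvPolynomial (Fin (s + 2)) k) :
    MvPolynomial (Fin s) (Polynomial k) :=
  eval₂ (C.comp Polynomial.C)
    (Fin.cons (C (Polynomial.C a0 + Polynomial.C c * Polynomial.X))
      (Fin.cons (C (Polynomial.C a1)) fun i => C (Polynomial.C (b i)) * X i)) F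

theorem eval_jordanChart {s : ℕ} (a0 c a1 : k) (b : Fin s → k)
    (F : MvPolynomial (Fin (s + 2)) k) (x : k) (y : Fin s → k) :
    eval₂ (Polynomial.evalRingHom x) y (jordanChart a0 c a1 b F) =
      eval (Fin.cons (a0 + x * c) (Fin.cons a1 fun i => y i * b i)) F := by
  rw [jordanChart, ← coe_eval₂Hom, ← coe_eval₂Hom, ← RingHom.comp_apply, comp_eval₂Hom, eval]
  congr 2
  · ext z
    simp
  · ext i
    refine Fin.cases ?_ (fun i => Fin.cases ?_ (fun i => ?_) i) i
    · simp [mul_comm c]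
    · simp
    · simp [mul_comm (b i)]

theorem eq_zero_of_jordanChart_eq_zero [Infinite k] {s d : ℕ} {a0 c a1 : k} {b : Fin s → k}
    (hc : c ≠ 0) (ha1 : a1 ≠ 0) (hb : ∀ i, b i ≠ 0) {F : MvPolynomial (Fin (s + 2)) k}
    (hF : F.IsHomogeneous d) (h : jordanChart a0 c a1 b F = 0) : F = 0 := by
  have hX : X 1 * F = 0 := by
    refine MvPolynomial.funext fun v => ?_
    rw [map_mul, eval_X, map_zero]
    by_cases hv : v 1 = 0
    · rw [hv, zero_mul]
    let r := v 1 / a1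
    have hr : r ≠ 0 := div_ne_zero hv ha1
    have hveq : v = r • (Fin.cons (a0 + ((v 0 / r - a0) / c) * c)
        (Fin.cons a1 fun i => (v i.succ.succ / (r * b i)) * b i) : Fin (s + 2) → k) := by
      ext i
      refine Fin.cases ?_ (fun i => Fin.cases ?_ (fun i => ?_) i) i
      · simp only [Pi.smul_apply, Fin.cons_zero, smul_eq_mul]
        field_simp
        ring
      · simp only [Pi.smul_apply, Fin.cons_zero, Fin.cons_succ, smul_eq_mul]
        exact (div_mul_cancel₀ _ ha1).symm
      · have := hb i
        simp only [Pi.smul_apply, Fin.cons_succ, smul_eq_mul]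
        field_simp
    rw [hveq, hF.eval_smul, ← eval_jordanChart, h, eval₂_zero, mul_zero, mul_zero]
  exact (mul_eq_zero.1 hX).resolve_left (X_ne_zero 1)

theorem eq_zero_of_infinite_zeros_jordan [CharZero k] {s d : ℕ} {p : Fin s → k}
    (hp0 : ∀ i, p i ≠ 0) (hfree : ∀ m : Fin s → ℤ, (∏ i, p i ^ m i) = 1 → ∀ i, m i = 0)
    {a0 c a1 : k} {b : Fin s → k} (hc : c ≠ 0) (ha1 : a1 ≠ 0) (hb : ∀ i, b i ≠ 0)
    {F : MvPolynomial (Fin (s + 2)) k} (hF : F.IsHomogeneous d)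
    (hz : {n : ℕ | eval (Fin.cons (a0 + (n : k) * c) (Fin.cons a1 fun i => p i ^ n * b i)) F =
      0}.Infinite) : F = 0 := by
  refine eq_zero_of_jordanChart_eq_zero (a0 := a0) hc ha1 hb hF ?_
  set G := jordanChart a0 c a1 b F with hG
  by_contra hne
  obtain ⟨m₀, hm₀⟩ := support_nonempty.2 hne
  have h0 := exponential_polynomial_eq_zero (fun m : G.support => coeff m.1 G)
    (l := fun m => ∏ i, p i ^ m.1 i)
    (fun m => Finset.prod_ne_zero_iff.2 fun i _ => pow_ne_zero _ (hp0 i))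
    (fun r hr m m' hmm => ?_) (hz.mono fun n hn => ?_) ⟨m₀, hm₀⟩
  · exact mem_support_iff.1 hm₀ h0
  · have h1 : ∏ i, p i ^ (((m.1 i : ℤ) - m'.1 i) * r) = 1 := by
      simp only [zpow_mul, zpow_natCast, Finset.prod_pow, zpow_sub₀ (hp0 _),
        Finset.prod_div_distrib, div_pow]
      rw [show (∏ i, p i ^ m.1 i) ^ r = _ from hmm, div_self]
      exact pow_ne_zero _ (Finset.prod_ne_zero_iff.2 fun i _ => pow_ne_zero _ (hp0 i))
    refine Subtype.ext (Finsupp.ext fun i => ?_)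
    have h2 := (mul_eq_zero.1 (hfree _ h1 i)).resolve_right (by exact_mod_cast hr.ne')
    exact_mod_cast sub_eq_zero.1 h2
  · have h1 : eval₂ (Polynomial.evalRingHom (n : k)) (fun i => p i ^ n) G = 0 := by
      rw [hG, eval_jordanChart]
      exact hn
    rw [eval₂_eq', ← Finset.sum_coe_sort] at h1
    refine Eq.trans (Finset.sum_congr rfl fun m _ => ?_) h1
    rw [Polynomial.coe_evalRingHom, ← Finset.prod_pow]
    simp only [← pow_mul, mul_comm]

end CriticalDensity

/-- in characteristic `0`, with `p₂, …, p_t` generating a free abelian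
subgroup of `k˟` of rank `t − 1` (here `t = s + 1 ≥ 2`, so `ℙ^t` has `s + 2` homogeneous
coordinates), the orbit of `(a₀ : a₁ : ⋯ : a_t)` under the automorphism with one
unipotent `2×2` Jordan block and diagonal part `p₂, …, p_t` is critically dense iff
`aᵢ ≠ 0` for all `1 ≤ i ≤ t`. -/
theorem stmt_16 {k : Type*} [Field k] [IsAlgClosed k] [CharZero k]
    (s : ℕ) (hs : 1 ≤ s) (p : Fin s → k)
    (hp0 : ∀ i, p i ≠ 0)
    (hfree : ∀ m : Fin s → ℤ, (∏ i, p i ^ m i) = 1 → ∀ i, m i = 0)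
    (a0 a1 : k) (b : Fin s → k)
    (ha : ¬ (a0 = 0 ∧ a1 = 0 ∧ ∀ i, b i = 0)) :
    (a1 ≠ 0 ∧ ∀ i, b i ≠ 0) ↔
      ∀ F : MvPolynomial (Fin (s + 2)) k, F ≠ 0 → (∃ d, F.IsHomogeneous d) →
        {n : ℤ | MvPolynomial.eval
          (Fin.cons (a0 + (n : k) * a1) (Fin.cons a1 fun i => p i ^ n * b i)) F = 0}.Finite := by
  constructor
  · rintro ⟨ha1, hb⟩ F hF ⟨d, hd⟩
    by_contra hinf
    set Z := {n : ℤ | MvPolynomial.eval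
      (Fin.cons (a0 + (n : k) * a1) (Fin.cons a1 fun i => p i ^ n * b i)) F = 0} with hZ
    have hfin : ∀ f : ℕ → ℤ, (f ⁻¹' Z).Finite → (Z ∩ Set.range f).Finite := fun f hf => by
      rw [Set.inter_comm, ← Set.image_preimage_eq_range_inter]
      exact hf.image f
    have hcover : Z ⊆ (Z ∩ Set.range fun n : ℕ => (n : ℤ)) ∪
        (Z ∩ Set.range fun n : ℕ => -(n : ℤ)) := fun n hn => by
      obtain ⟨m, rfl | rfl⟩ := n.eq_nat_or_neg
      · exact Or.inl ⟨hn, m, rfl⟩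
      · exact Or.inr ⟨hn, m, rfl⟩
    refine hinf (((hfin _ ?_).union (hfin _ ?_)).subset hcover) <;> by_contra hinf'
    · refine hF (eq_zero_of_infinite_zeros_jordan hp0 hfree ha1 ha1 hb hd (a0 := a0)
        (Set.Infinite.mono (fun n hn => ?_) hinf'))
      have hn' : MvPolynomial.eval _ F = 0 := hn
      simpa using hn'
    · refine hF (eq_zero_of_infinite_zeros_jordan (p := fun i => (p i)⁻¹) (a0 := a0)
        (fun i => inv_ne_zero (hp0 i)) (fun m hm => hfree m ?_) (neg_ne_zero.2 ha1) ha1 hb hd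
        (Set.Infinite.mono (fun n hn => ?_) hinf'))
      · simpa [inv_zpow] using hm
      · have hn' : MvPolynomial.eval _ F = 0 := hn
        simpa using hn'
  · intro h
    have hX : ∀ i : Fin (s + 2), ∃ n : ℤ, (Fin.cons (a0 + (n : k) * a1)
        (Fin.cons a1 fun i => p i ^ n * b i) : Fin (s + 2) → k) i ≠ 0 := by
      intro i
      by_contra! hi
      refine Set.infinite_univ ((h (MvPolynomial.X i) (MvPolynomial.X_ne_zero i)
        ⟨1, MvPolynomial.isHomogeneous_X k i⟩).subset fun n _ => ?_)
      exact (MvPolynomial.eval_X i).trans (hi n)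
    refine ⟨?_, fun i => ?_⟩
    · obtain ⟨n, hn⟩ := hX (Fin.succ 0)
      simpa using hn
    · obtain ⟨n, hn⟩ := hX i.succ.succ
      rw [Fin.cons_succ, Fin.cons_succ] at hn
      exact right_ne_zero_of_mul hn
end
end

section
/- Let t ≥ 2 and let p_1, …, p_t ∈ k be algebraically independent over the prime subfield of k. Let A be the k-subalgebra of End_k(k[Y,Y⁻¹]) generated by the Eulerian derivatives D_{p_1}, …, D_{p_t}, let A₊ be the two-sided ideal of A generated by D_{p_1}, …, D_{p_t}, and let 𝕜 denote the left A-module A/A₊. Then, computing Ext groups in the category of left A-modules: Ext¹_A(𝕜, A) = 0, while Ext²_A(𝕜, A) is infinite-dimensional as a k-vector space. (In particular A satisfies the condition χ₁ for the module A but fails the condition χ₂.) -/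
set_option synthInstance.maxHeartbeats 1000000
set_option maxHeartbeats 4000000
set_option maxSynthPendingDepth 3

noncomputable section

open CategoryTheory

universe u

section HomologicalAlgebra

/-- A linear map vanishing on the kernel of a surjection factors through it. -/
theorem LinearMap.exists_comp_eq_of_ker_le {R X Y Z : Type*} [Ring R] [AddCommGroup X]
    [AddCommGroup Y] [AddCommGroup Z] [Module R X] [Module R Y] [Module R Z]
    (g : X →ₗ[R] Y) (hg : Function.Surjective g) (f : X →ₗ[R] Z)
    (h : ∀ x, g x = 0 → f x = 0) : ∃ θ : Y →ₗ[R] Z, ∀ x, θ (g x) = f x :=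
  ⟨((LinearMap.ker g).liftQ f fun x hx => h x hx) ∘ₗ
      (g.quotKerEquivOfSurjective hg).symm.toLinearMap, fun x => by
    have : (g.quotKerEquivOfSurjective hg).symm (g x) = Submodule.Quotient.mk x := by
      rw [LinearEquiv.symm_apply_eq]; rfl
    rw [LinearMap.comp_apply, LinearEquiv.coe_coe, this]; rfl⟩

variable {A : Type*} [Ring A] {I : Submodule A A}
  {P₀ P₁ P₂ M : Type*} [AddCommGroup P₀] [Module A P₀] [AddCommGroup P₁] [Module A P₁]
  [AddCommGroup P₂] [Module A P₂] [AddCommGroup M] [Module A M]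

/-- If every homomorphism `I → M` is given by an element of `M`, then a homomorphism `P₁ → M`
vanishing on `ker d` extends along `d`, for any presentation `P₁ → P₀ → A ⧸ I → 0`. -/
theorem exists_extension_of_forall_eq_smul (d : P₁ →ₗ[A] P₀) (ε : P₀ →ₗ[A] A ⧸ I)
    (hε : Function.Surjective ε) (hd : Function.Exact d ε)
    (hM : ∀ f : I →ₗ[A] M, ∃ m : M, ∀ x : I, f x = (x : A) • m)
    (φ : P₁ →ₗ[A] M) (hφ : ∀ y, d y = 0 → φ y = 0) :
    ∃ θ : P₀ →ₗ[A] M, ∀ y, θ (d y) = φ y := by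
  obtain ⟨u, hu⟩ := hε (Submodule.Quotient.mk 1)
  have hau (a : A) : ε (a • u) = Submodule.Quotient.mk a := by
    rw [map_smul, hu, ← Submodule.Quotient.mk_smul, smul_eq_mul, mul_one]
  obtain ⟨φ', hφ'⟩ :=
    LinearMap.exists_comp_eq_of_ker_le d.rangeRestrict d.surjective_rangeRestrict φ
      fun y hy => hφ y (congrArg Subtype.val hy)
  have hI (x : I) : ((LinearMap.toSpanSingleton A P₀ u) ∘ₗ I.subtype) x ∈ LinearMap.range d :=
    (hd _).1 (by simp [hau])
  obtain ⟨m, hm⟩ := hM (φ' ∘ₗ LinearMap.codRestrict (LinearMap.range d) _ hI)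
  obtain ⟨θ, hθ⟩ := LinearMap.exists_comp_eq_of_ker_le
    ((LinearMap.toSpanSingleton A P₀ u).coprod d)
    (fun z => by
      obtain ⟨a, ha⟩ := Submodule.Quotient.mk_surjective I (ε z)
      obtain ⟨y, hy⟩ := (hd (z - a • u)).1 (by rw [map_sub, hau, ha, sub_self])
      exact ⟨(a, y), by simp [hy]⟩)
    ((LinearMap.toSpanSingleton A M m).coprod φ) (by
      rintro ⟨a, y⟩ h
      have h' : a • u = d (-y) := by
        rw [map_neg]; exact eq_neg_of_add_eq_zero_left (by simpa using h)
      have ha : a ∈ I := by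
        rw [← Submodule.Quotient.mk_eq_zero, ← hau, h']
        exact (hd _).2 ⟨_, rfl⟩
      have h1 := hm ⟨a, ha⟩
      have h2 : φ' (d.rangeRestrict (-y)) = a • m := by
        rw [← h1, LinearMap.comp_apply]
        congr 1
        exact Subtype.ext (by simpa using h'.symm)
      rw [hφ', map_neg] at h2
      simp [← h2])
  exact ⟨θ, fun y => by simpa using hθ (0, y)⟩

end HomologicalAlgebra

section Ext

variable {k : Type u} [Field k] {A : Type u} [Ring A] [Algebra k A] {I : Submodule A A}

theorem subsingleton_ext_one {M : Type u} [AddCommGroup M] [Module A M]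
    (hM : ∀ f : I →ₗ[A] M, ∃ m : M, ∀ x : I, f x = (x : A) • m) :
    Subsingleton (((Ext k (ModuleCat.{u} A) 1).obj
        (Opposite.op (ModuleCat.of A (A ⧸ I)))).obj (ModuleCat.of A M)) := by
  let P : ProjectiveResolution (ModuleCat.of A (A ⧸ I)) := projectiveResolution _
  have hε : Function.Surjective (P.π.f 0) := (ModuleCat.epi_iff_surjective _).1 inferInstance
  have hd : Function.Exact (P.complex.d 1 0) (P.π.f 0) :=
    (ShortComplex.ShortExact.moduleCat_exact_iff_function_exact _).1 P.exact₀
  have hd' : Function.Exact (P.complex.d 2 1) (P.complex.d 1 0) :=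
    (ShortComplex.ShortExact.moduleCat_exact_iff_function_exact _).1 (P.exact_succ 0)
  suffices h : Limits.IsZero ((P.complex.linearYonedaObj k (ModuleCat.of A M)).homology 1) from
    ModuleCat.subsingleton_of_isZero (h.of_iso (P.isoExt (R := k) 1 (ModuleCat.of A M)))
  rw [← HomologicalComplex.exactAt_iff_isZero_homology,
    HomologicalComplex.exactAt_iff' _ 0 1 2 (by simp) (by simp), ShortComplex.moduleCat_exact_iff]
  intro (φ : P.complex.X 1 ⟶ ModuleCat.of A M) (hφ : P.complex.d 2 1 ≫ φ = 0)
  obtain ⟨θ, hθ⟩ := exists_extension_of_forall_eq_smul (P.complex.d 1 0).hom (P.π.f 0).hom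
    hε hd hM φ.hom (fun y hy => by
      obtain ⟨z, rfl⟩ := (hd' y).1 hy
      exact congr($hφ z))
  refine ⟨ModuleCat.ofHom θ, ?_⟩
  change P.complex.d 1 0 ≫ ModuleCat.ofHom θ = φ
  ext y
  exact hθ y

theorem not_finite_ext_two {M S B : Type u} [AddCommGroup M] [Module A M] [AddCommGroup S]
    [Module A S] [AddCommGroup B] [Module A B] (ι : M →ₗ[A] S) (hι : Function.Injective ι)
    (ρ : S →ₗ[A] B) (hρ : Function.Exact ι ρ)
    (hS : ∀ f : I →ₗ[A] S, ∃ s : S, ∀ x : I, f x = (x : A) • s)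
    (h : ℕ → I →ₗ[A] B) (hh : ∀ j x, h j x ∈ LinearMap.range ρ)
    (hlin : ∀ (s : Finset ℕ) (c : ℕ → k) (b : B),
      (∀ x : I, ∑ j ∈ s, algebraMap k A (c j) • h j x = (x : A) • b) → ∀ j ∈ s, c j = 0) :
    ¬ Module.Finite k (((Ext k (ModuleCat.{u} A) 2).obj
        (Opposite.op (ModuleCat.of A (A ⧸ I)))).obj (ModuleCat.of A M)) := by
  let P : ProjectiveResolution (ModuleCat.of A (A ⧸ I)) := projectiveResolution _
  have hε : Function.Surjective (P.π.f 0) := (ModuleCat.epi_iff_surjective _).1 inferInstance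
  have hd : Function.Exact (P.complex.d 1 0) (P.π.f 0) :=
    (ShortComplex.ShortExact.moduleCat_exact_iff_function_exact _).1 P.exact₀
  have hd' : Function.Exact (P.complex.d 2 1) (P.complex.d 1 0) :=
    (ShortComplex.ShortExact.moduleCat_exact_iff_function_exact _).1 (P.exact_succ 0)
  let d₁ : P.complex.X 1 →ₗ[A] P.complex.X 0 := (P.complex.d 1 0).hom
  let d₂ : P.complex.X 2 →ₗ[A] P.complex.X 1 := (P.complex.d 2 1).hom
  let ε : P.complex.X 0 →ₗ[A] A ⧸ I := (P.π.f 0).hom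
  have : Module.Projective A (P.complex.X 0) := (P.complex.X 0).projective_of_module_projective
  have : Module.Projective A (P.complex.X 1) := (P.complex.X 1).projective_of_module_projective
  obtain ⟨α, hα⟩ := Module.projective_lifting_property I.mkQ ε I.mkQ_surjective
  have hαd (y) : (α ∘ₗ d₁) y ∈ I := by
    rw [← Submodule.Quotient.mk_eq_zero]
    exact congr($hα (d₁ y)).trans ((hd _).2 ⟨y, rfl⟩)
  let γ : P.complex.X 1 →ₗ[A] I := LinearMap.codRestrict I (α ∘ₗ d₁) hαd
  have hβ (j : ℕ) : ∃ β : P.complex.X 1 →ₗ[A] S, ∀ y, ρ (β y) = h j (γ y) := by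
    obtain ⟨β, hβ⟩ := Module.projective_lifting_property ρ.rangeRestrict
      (LinearMap.codRestrict (LinearMap.range ρ) (h j ∘ₗ γ) fun y => hh j _)
      ρ.surjective_rangeRestrict
    exact ⟨β, fun y => congr(($hβ y : B))⟩
  choose β hβ using hβ
  have hγ (z) : γ (d₂ z) = 0 := by
    have : d₁ (d₂ z) = 0 := (hd' _).2 ⟨z, rfl⟩
    exact Subtype.ext (by simp [γ, this])
  have hφ (j : ℕ) : ∃ φ : P.complex.X 2 →ₗ[A] M, ∀ z, ι (φ z) = β j (d₂ z) := by
    have hr (z) : (β j ∘ₗ d₂) z ∈ LinearMap.range ι :=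
      (hρ _).1 (by rw [LinearMap.comp_apply, hβ, hγ, map_zero])
    refine ⟨(LinearEquiv.ofInjective ι hι).symm.toLinearMap ∘ₗ
      LinearMap.codRestrict (LinearMap.range ι) _ hr, fun z => ?_⟩
    have := (LinearEquiv.ofInjective ι hι).apply_symm_apply ⟨_, hr z⟩
    exact congr(($this : S))
  choose φ hφ using hφ
  let K := (P.complex.linearYonedaObj k (ModuleCat.of A M)).sc' 1 2 3
  have hcyc (j : ℕ) : (ModuleCat.ofHom (φ j) : K.X₂) ∈ LinearMap.ker K.g.hom := by
    change P.complex.d 3 2 ≫ ModuleCat.ofHom (φ j) = 0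
    ext z
    apply hι
    have : d₂ (P.complex.d 3 2 z) = 0 := congr($(P.complex.d_comp_d 3 2 1) z)
    exact (hφ j _).trans ((congrArg (β j) this).trans ((map_zero _).trans (map_zero ι).symm))
  intro hfin
  let e : ((Ext k (ModuleCat.{u} A) 2).obj (Opposite.op (ModuleCat.of A (A ⧸ I)))).obj
      (ModuleCat.of A M) ≅ K.moduleCatLeftHomologyData.H :=
    P.isoExt 2 _ ≪≫ HomologicalComplex.homologyIsoSc' _ 1 2 3 (by simp) (by simp) ≪≫
      K.moduleCatHomologyIso
  have hfin' : Module.Finite k (LinearMap.ker K.g.hom ⧸ LinearMap.range K.moduleCatToCycles) :=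
    Module.Finite.equiv e.toLinearEquiv
  let v (j : ℕ) : LinearMap.ker K.g.hom ⧸ LinearMap.range K.moduleCatToCycles :=
    Submodule.Quotient.mk ⟨ModuleCat.ofHom (φ j), hcyc j⟩
  have hv : LinearIndependent k v := by
    rw [linearIndependent_iff']
    intro s c hc
    have : (LinearMap.range K.moduleCatToCycles).mkQ
        (∑ j ∈ s, c j • (⟨ModuleCat.ofHom (φ j), hcyc j⟩ : LinearMap.ker K.g.hom)) = 0 := by
      rw [map_sum, ← hc]; rfl
    rw [Submodule.mkQ_apply, Submodule.Quotient.mk_eq_zero] at this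
    obtain ⟨ψ, hψ⟩ := this
    replace hψ := congrArg Subtype.val hψ
    rw [AddSubmonoidClass.coe_finsetSum] at hψ
    change P.complex.d 2 1 ≫ (ψ : P.complex.X 1 ⟶ ModuleCat.of A M) =
      ∑ j ∈ s, c j • (ModuleCat.ofHom (φ j) : P.complex.X 2 ⟶ ModuleCat.of A M) at hψ
    have hψ' (z) : ψ.hom (d₂ z) = ∑ j ∈ s, algebraMap k A (c j) • φ j z := by
      refine congr(ModuleCat.Hom.hom $hψ z).trans ?_
      rw [ModuleCat.hom_sum, LinearMap.sum_apply]
      rfl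
    let : Module k S := Module.compHom S (algebraMap k A)
    have : IsScalarTower k A S := ⟨fun x y z => by
      rw [Algebra.smul_def, mul_smul]; rfl⟩
    have : SMulCommClass A k S := IsScalarTower.to_smulCommClass'
    obtain ⟨θ, hθ⟩ := exists_extension_of_forall_eq_smul d₁ ε hε hd hS
      (∑ j ∈ s, c j • β j - ι ∘ₗ ψ.hom) (fun y hy => by
        obtain ⟨z, rfl⟩ := (hd' y).1 hy
        change (∑ j ∈ s, c j • β j) (d₂ z) - ι (ψ.hom (d₂ z)) = 0
        rw [hψ', map_sum, LinearMap.sum_apply, sub_eq_zero]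
        refine Finset.sum_congr rfl fun j _ => ?_
        rw [map_smul, hφ]; rfl)
    have hρι (m) : ρ (ι m) = 0 := (hρ _).2 ⟨m, rfl⟩
    have hρθ (y) : ρ (θ (d₁ y)) = ∑ j ∈ s, algebraMap k A (c j) • h j (γ y) := by
      rw [hθ, LinearMap.sub_apply, map_sub, LinearMap.comp_apply, hρι, sub_zero,
        LinearMap.sum_apply, map_sum]
      refine Finset.sum_congr rfl fun j _ => ?_
      rw [← hβ, ← map_smul]; rfl
    obtain ⟨u, hu⟩ := hε (Submodule.Quotient.mk 1)
    have hmk (x) : Submodule.Quotient.mk (α x) = ε x := congr($hα x)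
    have hu' : α u - 1 ∈ I := by
      rw [← Submodule.Quotient.mk_eq_zero, Submodule.Quotient.mk_sub, hmk, sub_eq_zero]
      exact hu
    refine hlin s c (ρ (θ u) - ∑ j ∈ s, algebraMap k A (c j) • h j ⟨α u - 1, hu'⟩) fun x => ?_
    obtain ⟨y, hy⟩ := (hd ((x : A) • u)).1 (by
      refine (map_smul ε _ _).trans ?_
      rw [show ε u = _ from hu, ← Submodule.Quotient.mk_smul, smul_eq_mul, mul_one]
      exact (Submodule.Quotient.mk_eq_zero I).2 x.2)
    have hγy : γ y = x + (x : A) • (⟨α u - 1, hu'⟩ : I) := by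
      apply Subtype.ext
      change α (d₁ y) = x + x * (α u - 1)
      rw [show d₁ y = _ from hy, map_smul, smul_eq_mul]
      noncomm_ring
    have key := hρθ y
    rw [show d₁ y = _ from hy, map_smul, map_smul, hγy] at key
    rw [smul_sub, key, Finset.smul_sum, ← Finset.sum_sub_distrib]
    refine Finset.sum_congr rfl fun j _ => ?_
    rw [map_add, map_smul, smul_add, ← mul_smul, ← mul_smul, Algebra.commutes, add_sub_cancel_right]
  have := hv.finite
  exact not_finite ℕ

end Ext

section Polynomials

open MvPolynomial
open scoped Pointwise

variable {σ k : Type*} [Field k]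

/-- Polynomials of total degree at most the integer `n`; this is zero for negative `n`. -/
def degLE (σ k : Type*) [Field k] (n : ℤ) : Submodule k (MvPolynomial σ k) :=
  restrictSupport k {s | (s.degree : ℤ) ≤ n}

theorem mem_degLE {n : ℤ} {f : MvPolynomial σ k} :
    f ∈ degLE σ k n ↔ ∀ s ∈ f.support, (s.degree : ℤ) ≤ n := Iff.rfl

theorem degLE_mono {m n : ℤ} (h : m ≤ n) : degLE σ k m ≤ degLE σ k n :=
  restrictSupport_mono k fun s (hs : (s.degree : ℤ) ≤ m) => hs.trans h

theorem eq_zero_of_mem_degLE {n : ℤ} (hn : n < 0) {f : MvPolynomial σ k}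
    (hf : f ∈ degLE σ k n) : f = 0 := by
  by_contra h
  obtain ⟨s, hs⟩ := Finset.nonempty_iff_ne_empty.2 (mt support_eq_empty.1 h)
  have := mem_degLE.1 hf s hs
  omega

theorem mul_mem_degLE {m n : ℤ} {f g : MvPolynomial σ k} (hf : f ∈ degLE σ k m)
    (hg : g ∈ degLE σ k n) : f * g ∈ degLE σ k (m + n) := by
  have h : f * g ∈ restrictSupport k ({s : σ →₀ ℕ | (s.degree : ℤ) ≤ m} +
      {s : σ →₀ ℕ | (s.degree : ℤ) ≤ n}) := by
    rw [restrictSupport_add]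
    exact Submodule.mul_mem_mul hf hg
  refine restrictSupport_mono k ?_ h
  rintro _ ⟨s, hs, t, ht, rfl⟩
  simp only [Set.mem_ofPred_eq, map_add, Nat.cast_add] at *
  omega

theorem C_mem_degLE (a : k) : C a ∈ degLE σ k 0 :=
  (monomial_mem_restrictSupport k (m := 0)).2 (Or.inl (by simp))

theorem X_mem_degLE (i : σ) : (X i : MvPolynomial σ k) ∈ degLE σ k 1 :=
  (monomial_mem_restrictSupport k (m := Finsupp.single i 1)).2 (Or.inl (by simp))

theorem C_mul_mem_degLE {n : ℤ} (a : k) {f : MvPolynomial σ k} (hf : f ∈ degLE σ k n) :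
    C a * f ∈ degLE σ k n := by
  simpa using mul_mem_degLE (C_mem_degLE a) hf

theorem C_mul_X_add_C_mem_degLE (i : σ) (a b : k) :
    C a * X i + C b ∈ degLE σ k 1 :=
  add_mem (C_mul_mem_degLE a (X_mem_degLE i)) (degLE_mono zero_le_one (C_mem_degLE b))

theorem mem_degLE_iff_totalDegree_le {n : ℕ} {f : MvPolynomial σ k} :
    f ∈ degLE σ k n ↔ f.totalDegree ≤ n := by
  rw [mem_degLE, totalDegree, Finset.sup_le_iff]
  simp only [Nat.cast_le]
  rfl

theorem mem_degLE_zero_iff {f : MvPolynomial σ k} : f ∈ degLE σ k 0 ↔ ∃ a, f = C a := by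
  refine ⟨fun h => ⟨coeff 0 f, ?_⟩, ?_⟩
  · rw [← Nat.cast_zero, mem_degLE_iff_totalDegree_le, Nat.le_zero] at h
    exact totalDegree_eq_zero_iff_eq_C.1 h
  · rintro ⟨a, rfl⟩
    exact C_mem_degLE a

/-- Dividing with degree control: a cofactor of a nonzero linear factor drops the degree. -/
theorem mem_degLE_of_mul_mem {n : ℤ} {f l : MvPolynomial σ k} (hl : l.totalDegree = 1)
    (h : f * l ∈ degLE σ k n) : f ∈ degLE σ k (n - 1) := by
  by_cases hf : f = 0
  · rw [hf]; exact zero_mem _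
  have hl0 : l ≠ 0 := by rintro rfl; simp at hl
  have hn : 0 ≤ n := by
    by_contra hn
    exact mul_ne_zero hf hl0 (eq_zero_of_mem_degLE (not_le.1 hn) h)
  lift n to ℕ using hn
  rw [mem_degLE_iff_totalDegree_le, totalDegree_mul_of_isDomain hf hl0, hl] at h
  have := (mem_degLE_iff_totalDegree_le (n := n - 1)).2 (Nat.le_sub_of_add_le h)
  rwa [Nat.cast_sub (by omega), Nat.cast_one] at this

theorem aeval_mem_degLE {n : ℤ} (a : σ → k) {f : MvPolynomial σ k} (hf : f ∈ degLE σ k n) :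
    aeval (fun i => C (a i) * X i) f ∈ degLE σ k n := by
  rw [degLE, restrictSupport_eq_span] at hf
  refine Submodule.span_induction ?_ (by simp) (fun x y _ _ hx hy => ?_) (fun c x _ hx => ?_) hf
  · rintro _ ⟨s, hs, rfl⟩
    rw [aeval_monomial, map_one, one_mul]
    simp only [mul_pow]
    rw [Finsupp.prod_mul]
    have : (s.prod fun i e => (C (a i) : MvPolynomial σ k) ^ e) * s.prod (fun i e => X i ^ e)
      = monomial s (s.prod fun i e => a i ^ e) := by
      rw [monomial_eq, map_finsuppProd]
      simp only [map_pow]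
    rw [this]
    exact (monomial_mem_restrictSupport k).2 (Or.inl hs)
  · rw [map_add]; exact add_mem hx hy
  · rw [map_smul]; exact Submodule.smul_mem _ _ hx

theorem exists_monomial_sub_eq_sum [Fintype σ] (c : σ → k) (n : ℕ) {s : σ →₀ ℕ}
    (hs : s.degree ≤ n) : ∃ g : σ → MvPolynomial σ k, (∀ i, g i ∈ degLE σ k ((n : ℤ) - 1)) ∧
      monomial s 1 - C (aeval c (monomial s (1 : k))) = ∑ i, g i * (X i - C (c i)) := by
  classical
  induction n generalizing s with
  | zero =>
    obtain rfl := (Finsupp.degree_eq_zero_iff s).1 (Nat.le_zero.1 hs)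
    exact ⟨0, fun _ => zero_mem _, by simp⟩
  | succ n ih =>
    by_cases h0 : s = 0
    · subst h0
      exact ⟨0, fun _ => zero_mem _, by simp⟩
    obtain ⟨i, hi⟩ := Finsupp.ne_iff.1 h0
    obtain ⟨t, rfl⟩ : ∃ t, s = t + Finsupp.single i 1 :=
      ⟨s - Finsupp.single i 1, (tsub_add_cancel_of_le (Finsupp.single_le_iff.2
        (Nat.one_le_iff_ne_zero.2 hi))).symm⟩
    have ht : t.degree ≤ n := by simpa using hs
    obtain ⟨g, hg, h⟩ := ih ht
    refine ⟨fun j => C (c i) * g j + Pi.single (M := fun _ => MvPolynomial σ k) i (monomial t 1) j,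
      fun j => add_mem (C_mul_mem_degLE _ (degLE_mono (by simp) (hg j))) ?_, ?_⟩
    · rw [Pi.single_apply]
      split_ifs
      · exact (monomial_mem_restrictSupport k).2 (Or.inl (by simpa using ht))
      · exact zero_mem _
    · have hm : monomial (t + Finsupp.single i 1) (1 : k) = monomial t 1 * X i := by
        rw [X, monomial_mul, one_mul]
      simp only [add_mul, Finset.sum_add_distrib, mul_assoc, ← Finset.mul_sum, ← h]
      rw [Finset.sum_eq_single i (fun j _ hj => by rw [Pi.single_eq_of_ne hj, zero_mul]) (by simp),
        Pi.single_eq_same, hm, map_mul, aeval_X, C_mul]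
      ring

/-- A polynomial of degree at most `n + 1` vanishing at `c` is a combination of the `X i - c i`
with coefficients of degree at most `n`. -/
theorem exists_eq_sum_mul_X_sub_C [Fintype σ] (c : σ → k) (n : ℕ) {f : MvPolynomial σ k}
    (hf : f ∈ degLE σ k (n + 1)) (h0 : aeval c f = 0) :
    ∃ g : σ → MvPolynomial σ k, (∀ i, g i ∈ degLE σ k n) ∧ f = ∑ i, g i * (X i - C (c i)) := by
  classical
  suffices H : ∀ f ∈ degLE σ k (n + 1), ∃ g : σ → MvPolynomial σ k, (∀ i, g i ∈ degLE σ k n) ∧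
      f - C (aeval c f) = ∑ i, g i * (X i - C (c i)) by
    simpa [h0] using H f hf
  intro f hf
  rw [degLE, restrictSupport_eq_span] at hf
  refine Submodule.span_induction ?_ ⟨0, by simp⟩ ?_ ?_ hf
  · rintro _ ⟨s, hs, rfl⟩
    rw [Set.mem_ofPred_eq] at hs
    obtain ⟨g, hg, h⟩ := exists_monomial_sub_eq_sum c (n + 1) (s := s) (by exact_mod_cast hs)
    exact ⟨g, by simpa using hg, h⟩
  · rintro x y _ _ ⟨g, hg, hx⟩ ⟨g', hg', hy⟩
    refine ⟨g + g', fun i => add_mem (hg i) (hg' i), ?_⟩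
    simp only [Pi.add_apply, add_mul, Finset.sum_add_distrib, ← hx, ← hy, map_add]
    ring
  · rintro a x _ ⟨g, hg, hx⟩
    refine ⟨a • g, fun i => Submodule.smul_mem _ _ (hg i), ?_⟩
    simp only [Pi.smul_apply, smul_mul_assoc, ← Finset.smul_sum]
    rw [← hx, map_smul, smul_sub, smul_eq_mul, C_mul, ← smul_eq_C_mul]

theorem totalDegree_C_mul_X_add_C {i : σ} {a : k} (ha : a ≠ 0) (b : k) :
    (C a * X i + C b).totalDegree = 1 := by
  refine le_antisymm (mem_degLE_iff_totalDegree_le.1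
    (by exact_mod_cast C_mul_X_add_C_mem_degLE i a b)) ?_
  have h : Finsupp.single i 1 ∈ (C a * X i + C b).support := by
    classical
    rw [mem_support_iff, coeff_add, coeff_C_mul, coeff_X, coeff_C, if_pos rfl, if_neg, mul_one,
      add_zero]
    · exact ha
    · exact (Finsupp.single_ne_zero.2 one_ne_zero).symm
  simpa using le_totalDegree h

theorem X_sub_C_dvd_sub_aeval_update [DecidableEq σ] (o : σ) (c : k) (f : MvPolynomial σ k) :
    (X o - C c) ∣ f - aeval (Function.update X o (C c)) f := by
  induction f using MvPolynomial.induction_on with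
  | C a => simp
  | add f g hf hg => simpa only [map_add, add_sub_add_comm] using dvd_add hf hg
  | mul_X f i hf =>
    rw [map_mul, aeval_X]
    by_cases hi : i = o
    · subst hi
      obtain ⟨g, hg⟩ := hf
      rw [Function.update_self]
      exact ⟨f + g * C c, by linear_combination C c * hg⟩
    · rw [Function.update_of_ne hi, ← sub_mul]
      exact hf.mul_right _

theorem X_sub_C_dvd_of_dvd_mul {o i : σ} (hi : i ≠ o) (c : k) {a : k} (ha : a ≠ 0) (b : k)
    {f : MvPolynomial σ k} (h : (X o - C c) ∣ f * (C a * X i + C b)) : (X o - C c) ∣ f := by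
  classical
  have hf := X_sub_C_dvd_sub_aeval_update o c f
  obtain ⟨g, hg⟩ := h
  have h0 : C a * X i + C b ≠ 0 := by
    intro h
    have := totalDegree_C_mul_X_add_C (i := i) ha b
    simp [h] at this
  have hg' := congrArg (aeval (Function.update X o (C c))) hg
  simp only [map_mul, map_add, map_sub, aeval_X, aeval_C, Function.update_self,
    Function.update_of_ne hi, algebraMap_eq, sub_self, zero_mul] at hg'
  rwa [(mul_eq_zero.1 hg').resolve_right h0, sub_zero] at hf

/-- If `f l' = f' l` for linear polynomials `l`, `l'` in different variables, then
`f` and `f'` are the same multiple of `l` and `l'`. -/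
theorem exists_mul_linear_eq {o i : σ} (hi : i ≠ o) {a a' : k} (ha : a ≠ 0) (ha' : a' ≠ 0)
    (b b' : k) {f f' : MvPolynomial σ k}
    (h : f * (C a' * X i + C b') = f' * (C a * X o + C b)) :
    ∃ g, f = g * (C a * X o + C b) ∧ f' = g * (C a' * X i + C b') := by
  have hl : C a * X o + C b = C a * (X o - C (-(a⁻¹ * b))) := by
    rw [C_neg, sub_neg_eq_add, mul_add, ← C_mul, mul_inv_cancel_left₀ ha]
  obtain ⟨g, hg⟩ := X_sub_C_dvd_of_dvd_mul hi (-(a⁻¹ * b)) ha' b' (f := f)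
    ⟨f' * C a, by rw [h, hl]; ring⟩
  have hf : f = C a⁻¹ * g * (C a * X o + C b) := by
    rw [hg, hl]
    have : (C a⁻¹ : MvPolynomial σ k) * C a = 1 := by rw [← C_mul, inv_mul_cancel₀ ha, C_1]
    linear_combination (-(X o - C (-(a⁻¹ * b))) * g) * this
  refine ⟨_, hf, ?_⟩
  have h0 : C a * X o + C b ≠ 0 := by
    intro h
    have := totalDegree_C_mul_X_add_C (i := o) ha b
    simp [h] at this
  refine mul_right_cancel₀ h0 ?_
  rw [← h, hf]
  ring

/-- Evaluation at the point `(p i ^ m)`. -/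
def ev (p : σ → k) (m : ℤ) : MvPolynomial σ k →ₐ[k] k := aeval fun i => p i ^ m

/-- The substitution `X i ↦ p i ^ (-n) X i`. -/
def shift (p : σ → k) (n : ℤ) : MvPolynomial σ k →ₐ[k] MvPolynomial σ k :=
  aeval fun i => C (p i ^ (-n)) * X i

@[simp]
theorem ev_X (p : σ → k) (m : ℤ) (i : σ) : ev p m (X i) = p i ^ m := aeval_X _ _

@[simp]
theorem ev_C (p : σ → k) (m : ℤ) (a : k) : ev p m (C a) = a := aeval_C _ _

@[simp]
theorem shift_X (p : σ → k) (n : ℤ) (i : σ) : shift p n (X i) = C (p i ^ (-n)) * X i :=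
  aeval_X _ _

@[simp]
theorem shift_C (p : σ → k) (n : ℤ) (a : k) : shift p n (C a) = C a := aeval_C _ _

theorem shift_zero (p : σ → k) (f : MvPolynomial σ k) : shift p 0 f = f := by
  simp [shift]

theorem shift_mem_degLE (p : σ → k) (n : ℤ) {m : ℤ} {f : MvPolynomial σ k}
    (hf : f ∈ degLE σ k m) : shift p n f ∈ degLE σ k m := aeval_mem_degLE _ hf

/-- The genericity properties of the parameters that are used below. -/
structure Generic (p : σ → k) : Prop where
  ne_zero : ∀ i, p i ≠ 0
  zpow_injective : ∀ i, Function.Injective fun m : ℤ => p i ^ m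
  eq_zero_of_ev : ∀ f : MvPolynomial σ k, (∀ m, ev p m f = 0) → f = 0

namespace Generic

variable {p : σ → k}

theorem ev_shift (hp : Generic p) (m n : ℤ) (f : MvPolynomial σ k) :
    ev p m (shift p n f) = ev p (m - n) f := by
  have : (ev p m).comp (shift p n) = ev p (m - n) := by
    refine algHom_ext fun i => ?_
    simp [sub_eq_neg_add, zpow_add₀ (hp.ne_zero i)]
  exact DFunLike.congr_fun this f

theorem shift_shift (hp : Generic p) (m n : ℤ) (f : MvPolynomial σ k) :
    shift p m (shift p n f) = shift p (m + n) f := by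
  have : (shift p m).comp (shift p n) = shift p (m + n) := by
    refine algHom_ext fun i => ?_
    simp [mul_left_comm, neg_add_rev, zpow_add₀ (hp.ne_zero i), mul_assoc]
  exact DFunLike.congr_fun this f

theorem zpow_sub_ne_zero (hp : Generic p) (i : σ) {m n : ℤ} (h : m ≠ n) :
    p i ^ m - p i ^ n ≠ 0 :=
  sub_ne_zero.2 ((hp.zpow_injective i).ne h)

theorem sub_one_ne_zero (hp : Generic p) (i : σ) : p i - 1 ≠ 0 := by
  simpa using hp.zpow_sub_ne_zero i (m := 1) (n := 0) one_ne_zero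

theorem exists_interpolation (hp : Generic p) (o : σ) (n : ℕ) (r : ℕ → k) :
    ∃ H ∈ degLE σ k ((n : ℤ) - 1), ∀ m < n, ev p m H = r m := by
  rcases Nat.eq_zero_or_pos n with rfl | hn
  · exact ⟨0, zero_mem _, by simp⟩
  set v : ℕ → k := fun m => p o ^ (m : ℤ)
  have hv : Set.InjOn v (Finset.range n) := fun a _ b _ h => by
    exact_mod_cast hp.zpow_injective o h
  set P := Lagrange.interpolate (Finset.range n) v r
  have hP : P.natDegree < n := by
    have := Lagrange.degree_interpolate_lt r hv
    rw [Finset.card_range] at this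
    by_cases h0 : P = 0
    · rwa [h0, Polynomial.natDegree_zero]
    · exact (Polynomial.natDegree_lt_iff_degree_lt h0).2 this
  refine ⟨Polynomial.aeval (X o) P, ?_, fun m hm => ?_⟩
  · rw [Polynomial.aeval_eq_sum_range' hP]
    refine sum_mem fun i hi => Submodule.smul_mem _ _ ?_
    rw [X_pow_eq_monomial]
    refine (monomial_mem_restrictSupport k).2 (Or.inl ?_)
    have := Finset.mem_range.1 hi
    simp only [Set.mem_ofPred_eq, Finsupp.degree_single]
    omega
  · rw [← Polynomial.aeval_algHom_apply, ev_X]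
    exact Lagrange.eval_interpolate_at_node r hv (Finset.mem_range.2 hm)

/-- A polynomial of degree at most `n + 1` vanishing at the first `n + 1` points is a combination
of the linear forms vanishing at the last one, with coefficients of degree at most `n` vanishing
at the other points. -/
theorem exists_eq_sum_of_ev_eq_zero [Fintype σ] [Nonempty σ] (hp : Generic p) (n : ℕ)
    {f : MvPolynomial σ k} (hf : f ∈ degLE σ k (n + 1)) (h0 : ∀ m < n + 1, ev p m f = 0) :
    ∃ g : σ → MvPolynomial σ k, (∀ i, g i ∈ degLE σ k n) ∧ (∀ i, ∀ m < n, ev p m (g i) = 0) ∧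
      f = ∑ i, g i * (X i - C (p i ^ n)) := by
  classical
  obtain ⟨o⟩ := ‹Nonempty σ›
  obtain ⟨g, hg, hfg⟩ := exists_eq_sum_mul_X_sub_C (fun i => p i ^ (n : ℤ)) n hf
    (h0 n n.lt_succ_self)
  simp only [zpow_natCast] at hfg
  choose h hh hev using fun i => hp.exists_interpolation o n
    fun m => ev p m (g i) / (p o ^ m - p o ^ n)
  have hne (m : ℕ) (hm : m < n) : p o ^ m - p o ^ n ≠ 0 := by
    simpa using hp.zpow_sub_ne_zero o (m := m) (n := n) (by omega)
  have hX (i : σ) (c : k) : (X i - C c : MvPolynomial σ k) ∈ degLE σ k 1 := by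
    simpa [sub_eq_add_neg] using C_mul_X_add_C_mem_degLE i (1 : k) (-c)
  have hX' (i j : σ) (c : k) : h i * (X j - C c) ∈ degLE σ k n := by
    simpa using mul_mem_degLE (hh i) (hX j c)
  refine ⟨fun j => g j - h j * (X o - C (p o ^ n)) +
    if j = o then ∑ l, h l * (X l - C (p l ^ n)) else 0, fun j => ?_, fun j m hm => ?_, ?_⟩
  · refine add_mem (sub_mem (hg j) (hX' _ _ _)) ?_
    split_ifs
    · exact sum_mem fun l _ => hX' _ _ _
    · exact zero_mem _
  · have h1 : ev p m (g j - h j * (X o - C (p o ^ n))) = 0 := by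
      have := hne m hm
      simp only [map_sub, map_mul, ev_X, ev_C, hev j m hm, zpow_natCast]
      rw [div_mul_cancel₀ _ this, sub_self]
    rw [map_add, h1, zero_add]
    split_ifs
    · have h2 := h0 m (by omega)
      rw [hfg, map_sum] at h2
      rw [map_sum, ← zero_div (p o ^ m - p o ^ n), ← h2, Finset.sum_div]
      refine Finset.sum_congr rfl fun l _ => ?_
      simp only [map_mul, map_sub, ev_X, ev_C, hev l m hm]
      ring
    · exact map_zero _
  · simp only [add_mul, sub_mul, Finset.sum_add_distrib, Finset.sum_sub_distrib, ite_mul, zero_mul,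
      Finset.sum_ite_eq', Finset.mem_univ, if_true, ← hfg, Finset.sum_mul]
    rw [sub_add, ← Finset.sum_sub_distrib, Finset.sum_eq_zero, sub_zero]
    exact fun l _ => by ring

end Generic

end Polynomials

section Operators

open LaurentPolynomial (T T_apply)
open scoped LaurentPolynomial
open MvPolynomial

variable {σ k : Type*} [Field k]

/-- The coefficient of `T ^ z`, as a linear map. -/
def laurentCoeff (k : Type*) [Field k] (z : ℤ) : k[T;T⁻¹] →ₗ[k] k :=
  Finsupp.lapply z ∘ₗ (AddMonoidAlgebra.coeffLinearEquiv k).toLinearMap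

@[simp]
theorem laurentCoeff_apply (z : ℤ) (w : k[T;T⁻¹]) : laurentCoeff k z w = w.coeff z := rfl

theorem linearMap_ext_T {M : Type*} [AddCommGroup M] [Module k M] {f g : k[T;T⁻¹] →ₗ[k] M}
    (h : ∀ n, f (T n) = g (T n)) : f = g := by
  refine LinearMap.ext fun w => ?_
  induction w using LaurentPolynomial.induction_on' with
  | add p q hp hq => rw [map_add, map_add, hp, hq]
  | C_mul_T n a => rw [← LaurentPolynomial.smul_eq_C_mul, map_smul, map_smul, h]

theorem linearCombination_coeff_T {M : Type*} [AddCommGroup M] [Module k M] (φ : ℤ → M) (n : ℤ) :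
    Finsupp.linearCombination k φ (T n : k[T;T⁻¹]).coeff = φ n := by
  rw [T, AddMonoidAlgebra.coeff_single, Finsupp.linearCombination_single, one_smul]

/-- The operator `T ^ m ↦ f(p ^ m) T ^ (m - n)`. -/
def op1 (p : σ → k) (n : ℤ) : MvPolynomial σ k →ₗ[k] Module.End k k[T;T⁻¹] where
  toFun f := (Finsupp.linearCombination k fun m => ev p m f • (T (m - n) : k[T;T⁻¹])) ∘ₗ
    (AddMonoidAlgebra.coeffLinearEquiv k).toLinearMap
  map_add' f g := linearMap_ext_T fun m => by
    simp [LinearMap.comp_apply, linearCombination_coeff_T, add_smul]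
  map_smul' a f := linearMap_ext_T fun m => by
    simp [LinearMap.comp_apply, linearCombination_coeff_T, mul_smul]

@[simp]
theorem op1_T (p : σ → k) (n : ℤ) (f : MvPolynomial σ k) (m : ℤ) :
    op1 p n f (T m) = ev p m f • T (m - n) :=
  linearCombination_coeff_T _ _

theorem coeff_op1 (p : σ → k) (n : ℤ) (f : MvPolynomial σ k) (w : k[T;T⁻¹]) (z : ℤ) :
    (op1 p n f w).coeff z = ev p (z + n) f * w.coeff (z + n) := by
  have : laurentCoeff k z ∘ₗ op1 p n f = ev p (z + n) f • laurentCoeff k (z + n) := by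
    refine linearMap_ext_T fun m => ?_
    simp only [LinearMap.comp_apply, op1_T, map_smul, laurentCoeff_apply, T_apply,
      LinearMap.smul_apply, smul_eq_mul, sub_eq_iff_eq_add]
    split_ifs with h <;> simp [h]
  exact LinearMap.congr_fun this w

/-- The operator `∑ n, op1 p n (F n)`. -/
def op (p : σ → k) : (ℤ →₀ MvPolynomial σ k) →ₗ[k] Module.End k k[T;T⁻¹] :=
  Finsupp.lsum k (op1 p)

@[simp]
theorem op_single (p : σ → k) (n : ℤ) (f : MvPolynomial σ k) :
    op p (Finsupp.single n f) = op1 p n f := by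
  simp [op]

theorem coeff_op_T (p : σ → k) (F : ℤ →₀ MvPolynomial σ k) (m z : ℤ) :
    (op p F (T m)).coeff z = ev p m (F (m - z)) := by
  induction F using Finsupp.induction_linear with
  | zero => simp
  | add F G hF hG => simp [hF, hG]
  | single n f =>
    rw [op_single, op1_T, AddMonoidAlgebra.coeff_smul_apply, T_apply, Finsupp.single_apply]
    by_cases h : n = m - z
    · rw [if_pos h, if_pos (by omega), smul_eq_mul, mul_one]
    · rw [if_neg h, if_neg (by omega), smul_zero, map_zero]

theorem Generic.op_injective {p : σ → k} (hp : Generic p) : Function.Injective (op p) := by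
  refine (injective_iff_map_eq_zero _).2 fun F hF => Finsupp.ext fun n =>
    hp.eq_zero_of_ev _ fun m => ?_
  have := coeff_op_T p F m (m - n)
  rw [hF, sub_sub_cancel] at this
  simpa using this.symm

theorem Generic.op1_mul_op1 {p : σ → k} (hp : Generic p) (a b : ℤ) (g f : MvPolynomial σ k) :
    op1 p a g * op1 p b f = op1 p (a + b) (f * shift p b g) := by
  refine linearMap_ext_T fun m => ?_
  rw [Module.End.mul_apply, op1_T, map_smul, op1_T, op1_T, smul_smul, map_mul, hp.ev_shift,
    sub_sub, add_comm b]

theorem op1_zero_C (p : σ → k) (a : k) : op1 p 0 (C a) = algebraMap k _ a :=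
  linearMap_ext_T fun m => by simp [Module.algebraMap_end_apply]

/-- The symbol of `op1 p a g * op p F`. -/
def lmul (p : σ → k) (a : ℤ) (g : MvPolynomial σ k) :
    (ℤ →₀ MvPolynomial σ k) →ₗ[k] (ℤ →₀ MvPolynomial σ k) :=
  Finsupp.lsum k fun b => Finsupp.lsingle (a + b) ∘ₗ LinearMap.mulRight k (shift p b g)

@[simp]
theorem lmul_single (p : σ → k) (a : ℤ) (g : MvPolynomial σ k) (b : ℤ) (f : MvPolynomial σ k) :
    lmul p a g (Finsupp.single b f) = Finsupp.single (a + b) (f * shift p b g) := by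
  simp [lmul]

theorem lmul_apply (p : σ → k) (a : ℤ) (g : MvPolynomial σ k) (F : ℤ →₀ MvPolynomial σ k) (n : ℤ) :
    lmul p a g F n = F (n - a) * shift p (n - a) g := by
  induction F using Finsupp.induction_linear with
  | zero => simp
  | add F G hF hG => simp [hF, hG, add_mul]
  | single b f =>
    rw [lmul_single, Finsupp.single_apply, Finsupp.single_apply]
    by_cases h : b = n - a
    · subst h; simp
    · rw [if_neg h, if_neg (by omega), zero_mul]

theorem Generic.op1_mul_op {p : σ → k} (hp : Generic p) (a : ℤ) (g : MvPolynomial σ k)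
    (F : ℤ →₀ MvPolynomial σ k) : op1 p a g * op p F = op p (lmul p a g F) := by
  induction F using Finsupp.induction_linear with
  | zero => simp
  | add F G hF hG => simp [mul_add, hF, hG]
  | single b f => rw [op_single, hp.op1_mul_op1, lmul_single, op_single]

/-- The symbol of the Eulerian derivative with parameter `p i`. -/
def eulerPoly (p : σ → k) (i : σ) : MvPolynomial σ k := C (p i - 1)⁻¹ * (X i - 1)

theorem eulerPoly_mem_degLE (p : σ → k) (i : σ) : eulerPoly p i ∈ degLE σ k 1 := by
  refine C_mul_mem_degLE _ ?_
  simpa [sub_eq_add_neg] using C_mul_X_add_C_mem_degLE i (1 : k) (-1)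

theorem ev_eulerPoly (p : σ → k) (i : σ) (m : ℤ) :
    ev p m (eulerPoly p i) = (p i - 1)⁻¹ * (p i ^ m - 1) := by
  simp [eulerPoly]

theorem shift_eulerPoly (p : σ → k) (i : σ) (n : ℤ) : shift p n (eulerPoly p i) =
    C ((p i - 1)⁻¹ * p i ^ (-n)) * X i + C (-(p i - 1)⁻¹) := by
  simp only [eulerPoly, map_mul, map_sub, map_one, shift_C, shift_X, map_neg]
  ring

/-- The Eulerian derivative with parameter `p i`. -/
def euler (p : σ → k) (i : σ) : Module.End k k[T;T⁻¹] := op1 p 1 (eulerPoly p i)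

theorem eq_euler {p : σ → k} {D : σ → Module.End k k[T;T⁻¹]}
    (hD : ∀ i, ∀ n : ℤ, D i (T n) = ((p i ^ n - 1) / (p i - 1)) • T (n - 1)) : D = euler p :=
  funext fun i => linearMap_ext_T fun n => by
    rw [hD, euler, op1_T, ev_eulerPoly, div_eq_inv_mul]

/-- A subspace stable under a set of operators is a module over the algebra they generate. -/
def stableSubmodule {E M : Type*} [Ring E] [Algebra k E] [AddCommGroup M] [Module k M] [Module E M]
    [IsScalarTower k E M] (s : Set E) (V : Submodule k M) (hV : ∀ x ∈ s, ∀ v ∈ V, x • v ∈ V) :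
    Submodule (Algebra.adjoin k s) M where
  carrier := V
  add_mem' := V.add_mem
  zero_mem' := V.zero_mem
  smul_mem' := by
    rintro ⟨a, ha⟩ v hv
    revert v
    induction ha using Algebra.adjoin_induction with
    | mem x hx => exact fun hv => hV x hx _ hv
    | algebraMap r =>
      intro v hv
      change algebraMap k E r • v ∈ V
      rw [algebraMap_smul]
      exact V.smul_mem r hv
    | add x y _ _ hx hy =>
      intro v hv
      change (x + y) • v ∈ V
      rw [add_smul]
      exact V.add_mem (hx hv) (hy hv)
    | mul x y _ _ hx hy =>
      intro v hv
      change (x * y) • v ∈ V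
      rw [mul_smul]
      exact hx (hy hv)

end Operators

section EulerianAlgebra

open LaurentPolynomial (T T_apply)
open scoped LaurentPolynomial
open MvPolynomial

variable {σ k : Type*} [Field k] {p : σ → k}

/-- The algebra generated by the Eulerian derivatives with parameters `p i`. -/
abbrev eulerAlg (p : σ → k) : Subalgebra k (Module.End k k[T;T⁻¹]) :=
  Algebra.adjoin k (Set.range (euler p))

theorem euler_mem (p : σ → k) (i : σ) : euler p i ∈ eulerAlg p :=
  Algebra.subset_adjoin ⟨i, rfl⟩

/-- An operator `op1 p n f` with `f` of degree at most `n` that preserves the polynomials lies in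
the Eulerian algebra. -/
theorem Generic.op1_mem [Fintype σ] [Nonempty σ] (hp : Generic p) (n : ℕ) {f : MvPolynomial σ k}
    (hf : f ∈ degLE σ k n) (h0 : ∀ m < n, ev p m f = 0) : op1 p n f ∈ eulerAlg p := by
  induction n generalizing f with
  | zero =>
    obtain ⟨a, rfl⟩ := mem_degLE_zero_iff.1 (by exact_mod_cast hf)
    rw [Nat.cast_zero, op1_zero_C]
    exact Subalgebra.algebraMap_mem _ a
  | succ n ih =>
    obtain ⟨g, hg, hg0, hfg⟩ := hp.exists_eq_sum_of_ev_eq_zero n (by exact_mod_cast hf) h0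
    have h (i : σ) : op1 p (n + 1 : ℕ) (g i * (X i - C (p i ^ n))) =
        ((p i - 1) * p i ^ n) • (euler p i * op1 p n (g i)) := by
      rw [euler, hp.op1_mul_op1, ← map_smul, shift_eulerPoly, Nat.cast_succ, add_comm (1 : ℤ)]
      congr 1
      have h1 := hp.sub_one_ne_zero i
      have h2 := hp.ne_zero i
      rw [smul_eq_C_mul, mul_left_comm]
      congr 1
      rw [mul_add, ← mul_assoc, ← C_mul, ← C_mul, zpow_neg, zpow_natCast, sub_eq_add_neg,
        ← C_neg, show (p i - 1) * p i ^ n * ((p i - 1)⁻¹ * (p i ^ n)⁻¹) = 1 by field_simp,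
        show (p i - 1) * p i ^ n * (-(p i - 1)⁻¹) = -p i ^ n by field_simp, C_1, one_mul]
    rw [hfg, map_sum]
    refine sum_mem fun i _ => ?_
    rw [h i]
    exact Subalgebra.smul_mem _ (mul_mem (euler_mem p i) (ih (hg i) (hg0 i))) _

/-- The operators `op p F` with `F n` of degree at most `n`. -/
def symbolSpace (p : σ → k) : Submodule k (Module.End k k[T;T⁻¹]) :=
  Submodule.map (op p)
    { carrier := {F | ∀ n, F n ∈ degLE σ k n}
      add_mem' := fun hF hG n => add_mem (hF n) (hG n)
      zero_mem' := fun _ => zero_mem _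
      smul_mem' := fun a _ hF n => Submodule.smul_mem _ a (hF n) }

theorem op_mem_symbolSpace {F : ℤ →₀ MvPolynomial σ k} (hF : ∀ n, F n ∈ degLE σ k n) :
    op p F ∈ symbolSpace p := ⟨F, hF, rfl⟩

theorem op1_mem_symbolSpace {n : ℤ} {f : MvPolynomial σ k} (hf : f ∈ degLE σ k n) :
    op1 p n f ∈ symbolSpace p := by
  rw [← op_single]
  refine op_mem_symbolSpace fun m => ?_
  rw [Finsupp.single_apply]
  split_ifs with h
  · exact h ▸ hf
  · exact zero_mem _

theorem exists_op_eq {s : Module.End k k[T;T⁻¹]} (hs : s ∈ symbolSpace p) :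
    ∃ F : ℤ →₀ MvPolynomial σ k, (∀ n, F n ∈ degLE σ k n) ∧ op p F = s := hs

theorem Generic.euler_mul_mem_symbolSpace (hp : Generic p) (i : σ) {s : Module.End k k[T;T⁻¹]}
    (hs : s ∈ symbolSpace p) : euler p i * s ∈ symbolSpace p := by
  obtain ⟨F, hF, rfl⟩ := exists_op_eq hs
  rw [euler, hp.op1_mul_op]
  refine op_mem_symbolSpace fun n => ?_
  rw [lmul_apply]
  simpa using mul_mem_degLE (hF (n - 1)) (shift_mem_degLE p (n - 1) (eulerPoly_mem_degLE p i))

/-- The polynomials among the Laurent polynomials. -/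
def polySpace (k : Type*) [Field k] : Submodule k k[T;T⁻¹] where
  carrier := {w | ∀ z < 0, w.coeff z = 0}
  add_mem' hv hw z hz := by
    rw [AddMonoidAlgebra.coeff_add, Finsupp.add_apply, hv z hz, hw z hz, add_zero]
  zero_mem' _ _ := rfl
  smul_mem' a w hw z hz := by
    rw [AddMonoidAlgebra.coeff_smul_apply, hw z hz, smul_zero]

theorem T_mem_polySpace {n : ℤ} (hn : 0 ≤ n) : (T n : k[T;T⁻¹]) ∈ polySpace k := fun z hz => by
  rw [T_apply, if_neg (by omega)]

theorem coeff_euler (p : σ → k) (i : σ) (w : k[T;T⁻¹]) (z : ℤ) :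
    (euler p i w).coeff z = (p i - 1)⁻¹ * (p i ^ (z + 1) - 1) * w.coeff (z + 1) := by
  rw [euler, coeff_op1, ev_eulerPoly]

theorem euler_mem_polySpace (p : σ → k) (i : σ) {w : k[T;T⁻¹]} (hw : w ∈ polySpace k) :
    euler p i w ∈ polySpace k := fun z hz => by
  rw [coeff_euler]
  rcases (show z + 1 ≤ 0 by omega).lt_or_eq with h | h
  · rw [hw _ h, mul_zero]
  · rw [h, zpow_zero, sub_self, mul_zero, zero_mul]

theorem Generic.mem_polySpace_of_euler (hp : Generic p) (i : σ) {w : k[T;T⁻¹]}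
    (h : euler p i w ∈ polySpace k) : w ∈ polySpace k := fun z hz => by
  have := h (z - 1) (by omega)
  rw [coeff_euler, sub_add_cancel] at this
  refine (mul_eq_zero.1 this).resolve_left (mul_ne_zero (inv_ne_zero (hp.sub_one_ne_zero i)) ?_)
  simpa using hp.zpow_sub_ne_zero i (m := z) (n := 0) hz.ne

theorem Generic.mem_eulerAlg_of_apply_T_mem [Fintype σ] [Nonempty σ] (hp : Generic p)
    {s : Module.End k k[T;T⁻¹]} (hs : s ∈ symbolSpace p) (h : ∀ j : ℕ, s (T j) ∈ polySpace k) :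
    s ∈ eulerAlg p := by
  obtain ⟨F, hF, rfl⟩ := exists_op_eq hs
  rw [op, Finsupp.lsum_apply]
  refine sum_mem fun n _ => ?_
  dsimp only
  rcases lt_or_ge n 0 with hn | hn
  · rw [eq_zero_of_mem_degLE hn (hF n), map_zero]
    exact zero_mem _
  lift n to ℕ using hn
  refine hp.op1_mem n (hF n) fun m hm => ?_
  simpa [coeff_op_T] using h m (m - n) (by omega)

/-- `symbolSpace` as a module over the Eulerian algebra. -/
def symbolModule (hp : Generic p) : Submodule (eulerAlg p) (Module.End k k[T;T⁻¹]) :=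
  stableSubmodule _ (symbolSpace p) <| by
    rintro _ ⟨i, rfl⟩ s hs
    exact hp.euler_mul_mem_symbolSpace i hs

/-- `polySpace` as a module over the Eulerian algebra. -/
def polyModule (p : σ → k) : Submodule (eulerAlg p) k[T;T⁻¹] :=
  stableSubmodule _ (polySpace k) <| by
    rintro _ ⟨i, rfl⟩ s hs
    exact euler_mem_polySpace p i hs

theorem Generic.mem_symbolSpace (hp : Generic p) (a : eulerAlg p) : a.1 ∈ symbolSpace p := by
  have h : (1 : Module.End k k[T;T⁻¹]) ∈ symbolModule hp := by
    have := op1_mem_symbolSpace (p := p) (C_mem_degLE (1 : k))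
    rwa [op1_zero_C, map_one] at this
  have := (symbolModule hp).smul_mem a h
  rwa [Subalgebra.smul_def, smul_eq_mul, mul_one] at this

theorem apply_mem_polySpace (a : eulerAlg p) {w : k[T;T⁻¹]} (hw : w ∈ polySpace k) :
    a.1 w ∈ polySpace k :=
  (polyModule p).smul_mem a hw

theorem Generic.shift_eulerPoly_ne_zero (hp : Generic p) (i : σ) (n : ℤ) :
    shift p n (eulerPoly p i) ≠ 0 := by
  intro h
  have h1 := congrArg (ev p (n + 1)) h
  rw [hp.ev_shift, ev_eulerPoly, add_sub_cancel_left, zpow_one,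
    inv_mul_cancel₀ (hp.sub_one_ne_zero i), map_zero] at h1
  exact one_ne_zero h1

/-- Elements of `symbolSpace` satisfying all the relations between the Eulerian derivatives are
multiples of these. -/
theorem Generic.exists_eq_euler_mul [Fintype σ] [Nontrivial σ] (hp : Generic p)
    (s : σ → Module.End k k[T;T⁻¹]) (hs : ∀ i, s i ∈ symbolSpace p)
    (h : ∀ i j, ∀ a ∈ eulerAlg p, ∀ b ∈ eulerAlg p, a * euler p i = b * euler p j →
      a * s i = b * s j) :
    ∃ r ∈ symbolSpace p, ∀ i, s i = euler p i * r := by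
  classical
  choose F hF hFs using fun i => exists_op_eq (hs i)
  have key (i o : σ) (hi : i ≠ o) (n : ℤ) : F o n * shift p (n - 1) (eulerPoly p i) =
      F i n * shift p (n - 1) (eulerPoly p o) := by
    set β := eulerPoly p o - eulerPoly p i with hβ
    have hβ0 : β ≠ 0 := by
      intro h0
      have := congrArg (aeval (Function.update (0 : σ → k) o 1)) h0
      simp only [hβ, eulerPoly, map_sub, map_mul, aeval_C, aeval_X, Function.update_self, map_one,
        Function.update_of_ne hi, Pi.zero_apply, map_zero, sub_self, mul_zero, zero_sub, mul_neg,
        mul_one, neg_neg] at this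
      exact inv_ne_zero (hp.sub_one_ne_zero i) this
    have hmem (j : σ) :
        op1 p 2 (shift p (-1) (eulerPoly p j) * β) ∈ eulerAlg p := by
      have hdeg := mul_mem_degLE (shift_mem_degLE p (-1) (eulerPoly_mem_degLE p j))
        (sub_mem (eulerPoly_mem_degLE p o) (eulerPoly_mem_degLE p i))
      rw [one_add_one_eq_two, ← Nat.cast_two] at hdeg
      rw [← Nat.cast_two]
      refine hp.op1_mem 2 hdeg fun m hm => ?_
      have : ev p m β = 0 := by
        have h1 := hp.sub_one_ne_zero i
        have h2 := hp.sub_one_ne_zero o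
        rw [hβ, map_sub, ev_eulerPoly, ev_eulerPoly]
        interval_cases m <;> simp [h1, h2]
      rw [map_mul, this, mul_zero]
    have hrel : op1 p 2 (shift p (-1) (eulerPoly p i) * β) * euler p o =
        op1 p 2 (shift p (-1) (eulerPoly p o) * β) * euler p i := by
      have hβ' (j l : σ) : eulerPoly p l * shift p 1 (shift p (-1) (eulerPoly p j) * β) =
          eulerPoly p l * (eulerPoly p j * shift p 1 β) := by
        rw [map_mul (shift p 1), hp.shift_shift, add_neg_cancel, shift_zero]
      rw [euler, euler, hp.op1_mul_op1, hp.op1_mul_op1, hβ', hβ', mul_left_comm]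
    have := h o i _ (hmem i) _ (hmem o) hrel
    rw [← hFs, ← hFs, hp.op1_mul_op, hp.op1_mul_op] at this
    have := DFunLike.congr_fun (hp.op_injective this) (n + 2)
    rw [lmul_apply, lmul_apply, add_sub_cancel_right, map_mul, map_mul, hp.shift_shift,
      hp.shift_shift, ← sub_eq_add_neg, ← mul_assoc, ← mul_assoc] at this
    refine mul_right_cancel₀ (fun h0 => hβ0 (hp.eq_zero_of_ev _ fun m => ?_)) this
    rw [← add_sub_cancel_right m n, ← hp.ev_shift, h0, map_zero]
  obtain ⟨i₁, o, hi₁⟩ := exists_pair_ne σ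
  have hlin (i : σ) (n : ℤ) : (p i - 1)⁻¹ * p i ^ (-n) ≠ 0 :=
    mul_ne_zero (inv_ne_zero (hp.sub_one_ne_zero i)) (zpow_ne_zero _ (hp.ne_zero i))
  have hex (n : ℤ) : ∃ g, F o n = g * shift p (n - 1) (eulerPoly p o) := by
    have := key i₁ o hi₁ n
    rw [shift_eulerPoly, shift_eulerPoly] at this
    obtain ⟨g, hg, -⟩ := exists_mul_linear_eq hi₁ (hlin o _) (hlin i₁ _) _ _ this
    exact ⟨g, by rw [hg, shift_eulerPoly]⟩
  choose g hg using hex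
  have hgi (i : σ) (n : ℤ) : F i n = g n * shift p (n - 1) (eulerPoly p i) := by
    by_cases hi : i = o
    · rw [hi, hg]
    refine mul_right_cancel₀ (hp.shift_eulerPoly_ne_zero o (n - 1)) ?_
    rw [← key i o hi, hg]
    ring
  let G : ℤ →₀ MvPolynomial σ k :=
    Finsupp.onFinset ((F o).support.image (· - 1)) (fun m => g (m + 1)) fun m hm => by
      refine Finset.mem_image.2 ⟨m + 1, Finsupp.mem_support_iff.2 ?_, by simp⟩
      rw [hg]
      exact mul_ne_zero hm (hp.shift_eulerPoly_ne_zero o _)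
  refine ⟨op p G, op_mem_symbolSpace fun n => ?_, fun i => ?_⟩
  · have := hF o (n + 1)
    rw [hg] at this
    have := mem_degLE_of_mul_mem
      (by rw [shift_eulerPoly]; exact totalDegree_C_mul_X_add_C (hlin o _) _) this
    rwa [add_sub_cancel_right] at this
  · rw [← hFs, euler, hp.op1_mul_op]
    congr 1
    ext1 n
    rw [lmul_apply, hgi, Finsupp.onFinset_apply, sub_add_cancel]

/-- The generators of the Eulerian algebra. -/
def eulerGen (p : σ → k) (i : σ) : eulerAlg p := ⟨euler p i, euler_mem p i⟩

/-- The left ideal generated by the Eulerian derivatives. -/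
abbrev eulerIdeal (p : σ → k) : Ideal (eulerAlg p) := Ideal.span (Set.range (eulerGen p))

theorem eulerGen_mem (p : σ → k) (i : σ) : eulerGen p i ∈ eulerIdeal p :=
  Ideal.subset_span ⟨i, rfl⟩

theorem exists_sub_algebraMap_mem_eulerIdeal (a : eulerAlg p) :
    ∃ c : k, a - algebraMap k _ c ∈ eulerIdeal p := by
  obtain ⟨a, ha⟩ := a
  induction ha using Algebra.adjoin_induction with
  | mem x hx =>
    obtain ⟨i, rfl⟩ := hx
    exact ⟨0, by rw [map_zero, sub_zero]; exact eulerGen_mem p i⟩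
  | algebraMap r => exact ⟨r, by convert (eulerIdeal p).zero_mem; exact sub_self _⟩
  | add x y hx hy ihx ihy =>
    obtain ⟨c, hc⟩ := ihx
    obtain ⟨c', hc'⟩ := ihy
    refine ⟨c + c', ?_⟩
    have h := (eulerIdeal p).add_mem hc hc'
    rwa [sub_add_sub_comm, ← map_add] at h
  | mul x y hx hy ihx ihy =>
    obtain ⟨c, hc⟩ := ihx
    obtain ⟨c', hc'⟩ := ihy
    refine ⟨c * c', ?_⟩
    have h := (eulerIdeal p).add_mem ((eulerIdeal p).mul_mem_left ⟨x, hx⟩ hc')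
      ((eulerIdeal p).mul_mem_left (algebraMap k _ c') hc)
    have h2 := Algebra.commutes c' (⟨x, hx⟩ : eulerAlg p)
    rw [mul_sub, mul_sub, h2, sub_add_sub_cancel, ← map_mul, mul_comm c'] at h
    exact h

instance (p : σ → k) : (eulerIdeal p).IsTwoSided := ⟨fun {a} b ha => by
  induction ha using Submodule.span_induction with
  | mem x hx =>
    obtain ⟨c, hc⟩ := exists_sub_algebraMap_mem_eulerIdeal b
    have := (eulerIdeal p).add_mem ((eulerIdeal p).mul_mem_left x hc)
      ((eulerIdeal p).mul_mem_left (algebraMap k _ c) (Ideal.subset_span hx))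
    rwa [mul_sub, Algebra.commutes, sub_add_cancel] at this
  | zero => rw [zero_mul]; exact zero_mem _
  | add x y _ _ hx hy => rw [add_mul]; exact add_mem hx hy
  | smul a x _ hx => rw [smul_eq_mul, mul_assoc]; exact Ideal.mul_mem_left _ a hx⟩

theorem asIdeal_span_eq_eulerIdeal (p : σ → k) :
    TwoSidedIdeal.asIdeal (TwoSidedIdeal.span
      {x : eulerAlg p | ∃ i, (x : Module.End k k[T;T⁻¹]) = euler p i}) = eulerIdeal p := by
  refine le_antisymm ?_ (Ideal.span_le.2 ?_)
  · rw [← Ideal.asIdeal_toTwoSided (eulerIdeal p)]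
    refine TwoSidedIdeal.asIdeal.monotone (TwoSidedIdeal.span_le.2 ?_)
    rintro x ⟨i, hi⟩
    rw [Ideal.coe_toTwoSided]
    obtain rfl : x = eulerGen p i := Subtype.ext hi
    exact eulerGen_mem p i
  · rintro _ ⟨i, rfl⟩
    exact TwoSidedIdeal.subset_span ⟨i, rfl⟩

/-- Evaluation of operators at a Laurent polynomial. -/
def evalAt (p : σ → k) (w : k[T;T⁻¹]) : Module.End k k[T;T⁻¹] →ₗ[eulerAlg p] k[T;T⁻¹] where
  toFun s := s w
  map_add' _ _ := rfl
  map_smul' _ _ := rfl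

theorem apply_T_zero_of_mem_eulerIdeal (x : eulerAlg p) (hx : x ∈ eulerIdeal p) :
    x.1 (T 0) = 0 := by
  induction hx using Submodule.span_induction with
  | mem x hx =>
    obtain ⟨i, rfl⟩ := hx
    change euler p i (T 0) = 0
    rw [euler, op1_T, ev_eulerPoly, zpow_zero, sub_self, mul_zero, zero_smul]
  | zero => rfl
  | add x y _ _ hx hy =>
    change x.1 (T 0) + y.1 (T 0) = 0
    rw [hx, hy, add_zero]
  | smul a x _ hx =>
    change a.1 (x.1 (T 0)) = 0
    rw [hx, map_zero]

/-- The inclusion of the Eulerian algebra into `symbolModule`. -/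
def inclSymbol (hp : Generic p) : eulerAlg p →ₗ[eulerAlg p] symbolModule hp where
  toFun a := ⟨a.1, hp.mem_symbolSpace a⟩
  map_add' _ _ := rfl
  map_smul' _ _ := rfl

theorem inclSymbol_injective (hp : Generic p) : Function.Injective (inclSymbol hp) :=
  fun _ _ h => Subtype.ext (congrArg (fun s : symbolModule hp => s.1) h)

/-- The map sending an operator `s` to the polar parts of `s (T ^ j)`. -/
def polarParts (hp : Generic p) :
    symbolModule hp →ₗ[eulerAlg p] (ℕ → k[T;T⁻¹] ⧸ polyModule p) :=
  LinearMap.pi fun j => (polyModule p).mkQ ∘ₗ evalAt p (T j) ∘ₗ (symbolModule hp).subtype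

theorem polarParts_apply_eq_zero (hp : Generic p) (s : symbolModule hp) (j : ℕ) :
    polarParts hp s j = 0 ↔ s.1 (T j) ∈ polySpace k :=
  Submodule.Quotient.mk_eq_zero _

theorem exact_inclSymbol_polarParts [Fintype σ] [Nonempty σ] (hp : Generic p) :
    Function.Exact (inclSymbol hp) (polarParts hp) := fun s => by
  constructor
  · intro h
    exact ⟨⟨s.1, hp.mem_eulerAlg_of_apply_T_mem s.2 fun j =>
      (polarParts_apply_eq_zero hp s j).1 (congrFun h j)⟩, rfl⟩
  · rintro ⟨a, rfl⟩
    ext1 j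
    exact (polarParts_apply_eq_zero hp _ j).2 (apply_mem_polySpace a (T_mem_polySpace (by simp)))

theorem exists_eq_smul_of_linearMap_symbolModule [Fintype σ] [Nontrivial σ] (hp : Generic p)
    (f : eulerIdeal p →ₗ[eulerAlg p] symbolModule hp) :
    ∃ s : symbolModule hp, ∀ x : eulerIdeal p, f x = (x : eulerAlg p) • s := by
  obtain ⟨r, hr, hfr⟩ := hp.exists_eq_euler_mul
    (fun i => (f ⟨eulerGen p i, eulerGen_mem p i⟩).1) (fun i => (f _).2) fun i j a ha b hb hab => by
      have h := congrArg f (show (⟨a, ha⟩ : eulerAlg p) • (⟨eulerGen p i, eulerGen_mem p i⟩ :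
        eulerIdeal p) = (⟨b, hb⟩ : eulerAlg p) • ⟨eulerGen p j, eulerGen_mem p j⟩ from
          Subtype.ext (Subtype.ext hab))
      rw [map_smul, map_smul] at h
      exact congrArg Subtype.val h
  have hr' : r ∈ symbolModule hp := hr
  refine ⟨⟨r, hr'⟩, ?_⟩
  rintro ⟨x, hx⟩
  induction hx using Submodule.span_induction with
  | mem x hx =>
    obtain ⟨i, rfl⟩ := hx
    exact Subtype.ext (hfr i)
  | zero => rw [zero_smul]; exact map_zero f
  | add x y hx hy ihx ihy =>
    rw [add_smul, ← ihx, ← ihy, ← map_add]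
    rfl
  | smul a x hx ih =>
    change f (a • ⟨x, hx⟩) = (a * x) • _
    rw [map_smul, ih, mul_smul]

theorem exists_eq_smul_of_linearMap_eulerAlg [Fintype σ] [Nontrivial σ] (hp : Generic p)
    (f : eulerIdeal p →ₗ[eulerAlg p] eulerAlg p) :
    ∃ s : eulerAlg p, ∀ x : eulerIdeal p, f x = (x : eulerAlg p) • s := by
  obtain ⟨s, hs⟩ := exists_eq_smul_of_linearMap_symbolModule hp (inclSymbol hp ∘ₗ f)
  obtain ⟨o⟩ : Nonempty σ := inferInstance
  have h : s.1 ∈ eulerAlg p := hp.mem_eulerAlg_of_apply_T_mem s.2 fun j => by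
    refine hp.mem_polySpace_of_euler o ?_
    have h1 := congrArg Subtype.val (hs ⟨eulerGen p o, eulerGen_mem p o⟩)
    have h2 := LinearMap.congr_fun h1 (T (j : ℤ))
    change (f _).1 (T j) = euler p o (s.1 (T j)) at h2
    rw [← h2]
    exact apply_mem_polySpace _ (T_mem_polySpace (by simp))
  refine ⟨⟨s.1, h⟩, fun x => Subtype.ext ?_⟩
  have h1 := congrArg Subtype.val (hs x)
  exact h1

/-- The linear map sending the symbol `F` to `∑ n, (∂ F n / ∂ X o)(1) T ^ (-n)`. -/
def derivSymbol (p : σ → k) (o : σ) : (ℤ →₀ MvPolynomial σ k) →ₗ[k] k[T;T⁻¹] :=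
  Finsupp.lsum k fun n => LinearMap.toSpanSingleton k k[T;T⁻¹] (T (-n)) ∘ₗ
    (ev p 0).toLinearMap ∘ₗ (pderiv o).toLinearMap

theorem coeff_derivSymbol (p : σ → k) (o : σ) (F : ℤ →₀ MvPolynomial σ k) (z : ℤ) :
    (derivSymbol p o F).coeff z = ev p 0 (pderiv o (F (-z))) := by
  induction F using Finsupp.induction_linear with
  | zero => simp
  | add F G hF hG =>
    rw [map_add, AddMonoidAlgebra.coeff_add, Finsupp.add_apply, hF, hG, Finsupp.add_apply, map_add,
      map_add]
  | single n f =>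
    have h : derivSymbol p o (Finsupp.single n f) = ev p 0 (pderiv o f) • T (-n) :=
      Finsupp.lsum_single ..
    rw [h, AddMonoidAlgebra.coeff_smul_apply, T_apply, Finsupp.single_apply]
    by_cases h : n = -z
    · rw [if_pos h, if_pos (by omega), smul_eq_mul, mul_one]
    · rw [if_neg h, if_neg (by omega), smul_zero, map_zero, map_zero]

theorem Generic.derivSymbol_lmul (hp : Generic p) (o : σ) (a : ℤ) (g : MvPolynomial σ k)
    {F : ℤ →₀ MvPolynomial σ k} (hF : ∀ n, ev p 0 (F n) = 0) :
    derivSymbol p o (lmul p a g F) = op1 p a g (derivSymbol p o F) := by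
  ext z
  rw [coeff_derivSymbol, coeff_op1, coeff_derivSymbol, lmul_apply, Derivation.leibniz, map_add,
    smul_eq_mul, smul_eq_mul, map_mul, map_mul, hF, zero_mul, zero_add, hp.ev_shift,
    show 0 - (-z - a) = z + a by ring, show -z - a = -(z + a) by ring]

/-- The derivative of symbols with respect to `X o` at `T ^ 0` extends to a linear map on operators,
which is linear over the Eulerian algebra on the operators vanishing at `T ^ 0`. -/
theorem Generic.exists_deriv (hp : Generic p) (o : σ) :
    ∃ δ : Module.End k k[T;T⁻¹] →ₗ[k] k[T;T⁻¹],
      δ (euler p o) = (p o - 1)⁻¹ • T (-1) ∧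
      ∀ a : eulerAlg p, ∀ s ∈ symbolSpace p, s (T 0) = 0 → δ (a • s) = a • δ s := by
  obtain ⟨ψ, hψ⟩ := LinearMap.exists_leftInverse_of_injective (op p)
    (LinearMap.ker_eq_bot.2 hp.op_injective)
  have hδ (F) : (derivSymbol p o ∘ₗ ψ) (op p F) = derivSymbol p o F :=
    congrArg (derivSymbol p o) (LinearMap.congr_fun hψ F)
  refine ⟨derivSymbol p o ∘ₗ ψ, ?_, ?_⟩
  · rw [euler, ← op_single, hδ, derivSymbol, Finsupp.lsum_single]
    simp [eulerPoly]
  · rintro ⟨a, ha⟩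
    induction ha using Algebra.adjoin_induction with
    | mem x hx =>
      obtain ⟨i, rfl⟩ := hx
      intro s hs h0
      obtain ⟨F, hF, rfl⟩ := exists_op_eq hs
      change (derivSymbol p o ∘ₗ ψ) (euler p i * op p F) =
        euler p i ((derivSymbol p o ∘ₗ ψ) (op p F))
      rw [euler, hp.op1_mul_op, hδ, hδ, hp.derivSymbol_lmul]
      intro n
      rw [← sub_sub_cancel 0 n, ← coeff_op_T, h0]
      rfl
    | algebraMap r =>
      intro s hs h0
      change (derivSymbol p o ∘ₗ ψ) (r • (1 : Module.End k k[T;T⁻¹]) * s) = r • _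
      rw [smul_mul_assoc, one_mul, map_smul]
      rfl
    | add x y hx hy ihx ihy =>
      intro s hs h0
      have h1 := ihx s hs h0
      have h2 := ihy s hs h0
      change (derivSymbol p o ∘ₗ ψ) ((x + y) * s) = x _ + y _
      rw [add_mul, map_add]
      exact congrArg₂ _ h1 h2
    | mul x y hx hy ihx ihy =>
      intro s hs h0
      have h1 := ihy s hs h0
      have h2 := ihx ((⟨y, hy⟩ : eulerAlg p) • s) ((symbolModule hp).smul_mem _ hs) (by
        change y (s (T 0)) = 0
        rw [h0, map_zero])
      rw [h1] at h2
      exact h2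

theorem single_mem_range_polarParts (hp : Generic p) (o : σ) (j : ℕ) (w : k[T;T⁻¹] ⧸ polyModule p) :
    Pi.single j w ∈ LinearMap.range (polarParts hp) := by
  obtain ⟨w, rfl⟩ := (polyModule p).mkQ_surjective w
  let N : Submodule (eulerAlg p) k[T;T⁻¹] := (LinearMap.range (polarParts hp)).comap
    (LinearMap.single (eulerAlg p) (fun _ => k[T;T⁻¹] ⧸ polyModule p) j ∘ₗ (polyModule p).mkQ)
  change w ∈ N
  induction w using LaurentPolynomial.induction_on' with
  | add v w hv hw => exact add_mem hv hw
  | C_mul_T n a =>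
    suffices h : T n ∈ N by
      rw [← LaurentPolynomial.smul_eq_C_mul]
      exact N.smul_mem (algebraMap k _ a) h
    rcases le_or_gt 0 n with hn | hn
    · have h : (polyModule p).mkQ (T n) = 0 :=
        (Submodule.Quotient.mk_eq_zero _).2 (T_mem_polySpace hn)
      change LinearMap.single (eulerAlg p) (fun _ => k[T;T⁻¹] ⧸ polyModule p) j
        ((polyModule p).mkQ (T n)) ∈ LinearMap.range (polarParts hp)
      rw [h, map_zero]
      exact zero_mem _
    obtain ⟨a, ha⟩ := Int.eq_ofNat_of_zero_le (show 0 ≤ -n by omega)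
    obtain rfl : n = -a := by omega
    obtain ⟨H, hH, hev⟩ := hp.exists_interpolation o (a + j) (Pi.single j 1)
    refine ⟨⟨op1 p (a + j : ℕ) H, op1_mem_symbolSpace (degLE_mono (by simp) hH)⟩, ?_⟩
    change _ = (Pi.single j ((polyModule p).mkQ (T (-a))) : ℕ → k[T;T⁻¹] ⧸ polyModule p)
    ext1 m
    change (polyModule p).mkQ (op1 p (a + j : ℕ) H (T m)) = _
    rw [op1_T]
    rcases lt_or_ge m (a + j) with hm | hm
    · rw [hev m hm]
      by_cases hmj : m = j
      · subst hmj
        rw [Pi.single_eq_same, Pi.single_eq_same, one_smul]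
        congr 2
        push_cast
        ring
      · rw [Pi.single_eq_of_ne hmj, Pi.single_eq_of_ne hmj, zero_smul, map_zero]
    · rw [Pi.single_eq_of_ne (by omega)]
      exact (Submodule.Quotient.mk_eq_zero _).2
        ((polySpace k).smul_mem _ (T_mem_polySpace (by omega)))

/-- Infinitely many independent homomorphisms from the ideal to the polar parts. -/
theorem exists_linearMap_polarParts (hp : Generic p) (o : σ) :
    ∃ h : ℕ → eulerIdeal p →ₗ[eulerAlg p] (ℕ → k[T;T⁻¹] ⧸ polyModule p),
      (∀ j x, h j x ∈ LinearMap.range (polarParts hp)) ∧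
      ∀ (s : Finset ℕ) (c : ℕ → k) (b : ℕ → k[T;T⁻¹] ⧸ polyModule p),
        (∀ x : eulerIdeal p, ∑ j ∈ s, algebraMap k (eulerAlg p) (c j) • h j x =
          (x : eulerAlg p) • b) → ∀ j ∈ s, c j = 0 := by
  obtain ⟨δ, hδ, hlin⟩ := hp.exists_deriv o
  let δ' : eulerIdeal p →ₗ[eulerAlg p] k[T;T⁻¹] :=
    { toFun := fun x => δ x.1.1
      map_add' := fun x y => map_add δ x.1.1 y.1.1
      map_smul' := fun a x =>
        hlin a x.1.1 (hp.mem_symbolSpace x.1) (apply_T_zero_of_mem_eulerIdeal x.1 x.2) }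
  refine ⟨fun j => LinearMap.single (eulerAlg p) (fun _ => k[T;T⁻¹] ⧸ polyModule p) j ∘ₗ
    (polyModule p).mkQ ∘ₗ δ', fun j x => single_mem_range_polarParts hp o j _,
    fun s c b hb i hi => ?_⟩
  have h1 := congrFun (hb ⟨eulerGen p o, eulerGen_mem p o⟩) i
  obtain ⟨w, hw⟩ := (polyModule p).mkQ_surjective (b i)
  rw [Finset.sum_apply, Finset.sum_eq_single i] at h1
  · have h2 : (polyModule p).mkQ (c i • δ (euler p o)) = (polyModule p).mkQ (euler p o w) := by
      refine Eq.trans ?_ (h1.trans ?_)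
      · change _ = algebraMap k (eulerAlg p) (c i) •
          (Pi.single i _ : ℕ → k[T;T⁻¹] ⧸ polyModule p) i
        rw [Pi.single_eq_same]
        rfl
      · change eulerGen p o • b i = _
        rw [← hw]
        rfl
    have h3 := (Submodule.Quotient.eq _).1 h2 (-1) (by norm_num)
    rw [hδ, AddMonoidAlgebra.coeff_sub, Finsupp.sub_apply, coeff_euler] at h3
    have h4 := hp.sub_one_ne_zero o
    simpa [h4] using h3
  · intro j _ hj
    change algebraMap k (eulerAlg p) (c j) •
      (Pi.single j _ : ℕ → k[T;T⁻¹] ⧸ polyModule p) i = _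
    rw [Pi.single_eq_of_ne hj.symm, smul_zero]
  · exact fun h => absurd hi h

/-- Parameters algebraically independent over the prime field are generic. -/
theorem Generic.of_algebraicIndependent (hp : AlgebraicIndependent (⊥ : Subfield k) p) :
    Generic p := by
  have hχ : Function.Injective fun s : σ →₀ ℕ => s.prod fun i e => p i ^ e := fun s s' h => by
    refine monomial_left_injective (one_ne_zero (α := (⊥ : Subfield k))) (hp ?_)
    simpa only [aeval_monomial, map_one, one_mul] using h
  have h0 (i : σ) : p i ≠ 0 := hp.ne_zero i
  refine ⟨h0, fun i m n h => ?_, fun f hf => ?_⟩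
  · have h1 : p i ^ (m - n) = 1 := by
      rw [zpow_sub₀ (h0 i), div_eq_one_iff_eq (zpow_ne_zero _ (h0 i))]
      exact h
    have h2 : p i ^ (m - n).natAbs = 1 := by
      rw [← zpow_natCast, Int.natCast_natAbs]
      rcases abs_choice (m - n) with h | h <;> simp only [h, zpow_neg, h1, inv_one]
    have h3 := Finsupp.single_eq_zero.1
      (hχ (a₁ := Finsupp.single i _) (a₂ := 0) (by simpa using h2))
    omega
  · have hli := (linearIndependent_monoidHom (Multiplicative ℕ) k).comp
      (fun s : σ →₀ ℕ => powersHom k (s.prod fun i e => p i ^ e))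
      ((powersHom k).injective.comp hχ)
    have hc := linearIndependent_iff'.1 hli f.support (fun s => coeff s f) (by
      ext m
      have := hf (m.toAdd : ℕ)
      rw [f.as_sum, map_sum] at this
      rw [Finset.sum_apply, Pi.zero_apply, ← this]
      refine Finset.sum_congr rfl fun s _ => ?_
      rw [ev, aeval_monomial]
      simp [Finsupp.prod, ← Finset.prod_pow, ← pow_mul, mul_comm])
    ext s
    by_cases hs : s ∈ f.support
    · exact hc s hs
    · exact notMem_support_iff.1 hs

end EulerianAlgebra

/-- let `A` be the algebra generated by `t ≥ 2` Eulerian derivatives with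
parameters algebraically independent over the prime subfield, `A₊` the two-sided ideal
generated by the generators, and `𝕜 = A/A₊`.  Then `Ext¹_A(𝕜, A) = 0` while
`Ext²_A(𝕜, A)` is infinite-dimensional over `k`. -/
theorem stmt_19 {k : Type u} [Field k] [IsAlgClosed k]
    (t : ℕ) (ht : 2 ≤ t) (p : Fin t → k)
    (hp : AlgebraicIndependent (⊥ : Subfield k) p)
    (D : Fin t → Module.End k (LaurentPolynomial k))
    (hD : ∀ i, ∀ n : ℤ, D i (LaurentPolynomial.T n)
        = ((p i ^ n - 1) / (p i - 1)) • LaurentPolynomial.T (n - 1))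
    (A : Subalgebra k (Module.End k (LaurentPolynomial k)))
    (hA : A = Algebra.adjoin k (Set.range D))
    (Aplus : Submodule A A)
    (hAplus : Aplus = TwoSidedIdeal.asIdeal (TwoSidedIdeal.span
      {x : A | ∃ i, (x : Module.End k (LaurentPolynomial k)) = D i})) :
    Subsingleton (((Ext k (ModuleCat.{u} A) 1).obj
        (Opposite.op (ModuleCat.of A (A ⧸ Aplus)))).obj (ModuleCat.of A A)) ∧
    ¬ Module.Finite k (((Ext k (ModuleCat.{u} A) 2).obj
        (Opposite.op (ModuleCat.of A (A ⧸ Aplus)))).obj (ModuleCat.of A A)) := by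
  subst hA
  obtain rfl := eq_euler hD
  rw [asIdeal_span_eq_eulerIdeal] at hAplus
  subst hAplus
  have hg := Generic.of_algebraicIndependent hp
  have : Nontrivial (Fin t) := Fin.nontrivial_iff_two_le.2 ht
  obtain ⟨h, hh, hlin⟩ := exists_linearMap_polarParts hg ⟨0, by omega⟩
  exact ⟨subsingleton_ext_one (exists_eq_smul_of_linearMap_eulerAlg hg),
    not_finite_ext_two (inclSymbol hg) (inclSymbol_injective hg)
      (polarParts hg) (exact_inclSymbol_polarParts hg)
      (exists_eq_smul_of_linearMap_symbolModule hg) h hh hlin⟩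
end
end
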